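/- arXiv:1902.03366 — 2 statements merged into one kernel-verified Lean document; each statement's English description precedes it below -/
import Mathlib

section
/- Third-order MASC rate region, converse: Let (X₁ᵢ,X₂ᵢ)_{i≥1} be i.i.d. pairs with single-letter joint distribution P_{X₁X₂} on countable alphabets satisfying V(X₁,X₂) > 0, V(X₁|X₂) > 0, V(X₂|X₁) > 0, T(X₁,X₂) < ∞, T(X₁|X₂) < ∞, and T(X₂|X₁) < ∞. Fix ε ∈ (0,1). Then there exist a constant C' ≥ 0 and n₀ ∈ ℕ such that for all n ≥ n₀, every (n, M₁, M₂, ε) MASC satisfies √n·( R̄ − H̄ + ((log n)/(2n))·1 + (C'/n)·1 ) ∈ Q_inv(𝖵,ε), where R₁ := (1/n)·log M₁ and R₂ := (1/n)·log M₂. -/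
/-!
The proof combines a non-asymptotic converse with a multivariate Berry–Esseen theorem.

*Converse.* Fix a code and restrict to the correctly decoded source sequences. Given the second
sequence, such a sequence is determined by one of `M₁` messages, so those whose conditional
information exceeds `log M₁ + (log n) / 2` have total probability at most `1 / √n`; the same count
applies to the other two informations (`measure_le_of_injOn`, `measure_bad_le`). Hence the three
information sums are simultaneously below `n R̄ + (log n) / 2` with probability at least
`1 - ε - 3 / √n` (`converse_bound`).

*Berry–Esseen.* The covariance matrix `A Aᵀ` may be singular, so the centered information vector is
first written as the image under `A` of an isotropic vector (`exists_isotropic`); orthants pull back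
to intersections of three half-spaces whose normals are the rows of `A`, called wedges here. For
isotropic summands the error on wedges is `O(1 / √n)` (`berry_esseen`). This is shown by Lindeberg
replacement: smoothing a bounded function by a Gaussian of standard deviation `r` leaves a third-order
Taylor remainder of size `O(r⁻³)` (`smooth_taylor`), and the Gaussian variables already substituted
supply the smoothing. The terms with little smoothing are controlled by induction on `n`
(`lindeberg_step`, `smoothed_bound`); the initial smoothing is removed with Gaussian
anti-concentration (`desmooth`, `gs_wedge_collar`).

*Conclusion.* The Gaussian orthant probability is thus at least `1 - ε - O(1 / √n)`. Moving the
corner by `δ` increases it by at least `c δ` as long as it stays between `(1 - ε) / 2` and `1 - ε`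
(`wedge_growth`): rotating one Gaussian vector into an independent copy keeps it Gaussian, and a path
from inside the wedge to outside the widened wedge spends time proportional to `δ` in between. So a
shift of the corner by `C' / √n` recovers the missing `O(1 / √n)` (`cdf_lower_bound`).
-/

/-- `P[Z ≤ z]` for the centered Gaussian vector `Z = A·W` in `ℝ^d`, where `W` is a vector of
`d` independent standard Gaussians (so `Z` has covariance `A·Aᵀ`). -/
noncomputable def stdGaussianCdf {d : ℕ} (A : Matrix (Fin d) (Fin d) ℝ) (z : Fin d → ℝ) : ℝ :=
  ((MeasureTheory.Measure.map (fun w => A.mulVec w)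
      (MeasureTheory.Measure.pi fun _ : Fin d => ProbabilityTheory.gaussianReal 0 1))
    {y | ∀ i, y i ≤ z i}).toReal

namespace MascConverse

open MeasureTheory ProbabilityTheory
open scoped RealInnerProductSpace

/-! ### Gaussian laws and the Cameron–Martin formula -/

/-- Euclidean three-space, in which the information vectors live. -/
abbrev E := EuclideanSpace ℝ (Fin 3)

/-- The law of `r • Z` for a standard Gaussian `Z`, so `gs r = N(0, r² I)`. -/
noncomputable def gs (r : ℝ) : Measure E := (stdGaussian E).map (fun z => r • z)

instance (r : ℝ) : IsProbabilityMeasure (gs r) :=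
  Measure.isProbabilityMeasure_map (by fun_prop)

lemma charFun_gs (r : ℝ) (t : E) :
    charFun (gs r) t = Complex.exp (-(r ^ 2 * ‖t‖ ^ 2) / 2) := by
  rw [gs, charFun_map_smul, charFun_stdGaussian, norm_smul]
  congr 1
  push_cast
  rw [mul_pow, Real.norm_eq_abs, ← Complex.ofReal_pow |r| 2, sq_abs]
  push_cast
  ring

lemma gs_one : gs 1 = stdGaussian E := by
  simp [gs]

lemma gs_zero : gs 0 = Measure.dirac 0 := by
  simp [gs, Measure.map_const]

/-- Variances of independent isotropic Gaussians add up. -/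
lemma gs_conv {a b c : ℝ} (h : a ^ 2 + b ^ 2 = c ^ 2) : gs a ∗ gs b = gs c := by
  apply Measure.ext_of_charFun
  ext t
  rw [charFun_conv, charFun_gs, charFun_gs, charFun_gs, ← Complex.exp_add]
  congr 1
  have : (c : ℂ) ^ 2 = a ^ 2 + b ^ 2 := by exact_mod_cast h.symm
  rw [this]
  ring

/-- The Gaussian law on `E × E` is mapped to the Gaussian law by each rotation. -/
lemma map_rotation (θ : ℝ) :
    ((stdGaussian E).prod (stdGaussian E)).map
      (fun p => Real.cos θ • p.1 + Real.sin θ • p.2) = stdGaussian E := by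
  have h := gs_conv (a := Real.cos θ) (b := Real.sin θ) (c := 1)
    (by rw [Real.cos_sq_add_sin_sq]; norm_num)
  rw [gs_one] at h
  conv_rhs => rw [← h]
  rw [Measure.conv, gs, gs, Measure.map_prod_map _ _ (by fun_prop) (by fun_prop),
    Measure.map_map (by fun_prop) (by fun_prop)]
  rfl

/-- Density of `N(a, I)` with respect to `N(0, I)`. -/
noncomputable def shiftDensity (a z : E) : ℝ := Real.exp (⟪a, z⟫ - ‖a‖ ^ 2 / 2)

lemma shiftDensity_pos (a z : E) : 0 < shiftDensity a z := Real.exp_pos _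

@[fun_prop]
lemma continuous_shiftDensity (a : E) : Continuous (shiftDensity a) := by
  unfold shiftDensity; fun_prop

lemma stdGaussian_eq_map :
    stdGaussian E = (Measure.pi (fun _ : Fin 3 ↦ gaussianReal 0 1)).map (WithLp.toLp 2) :=
  map_pi_eq_stdGaussian.symm

/-- The Fourier transform of `N(0, I)` reweighted by the shift density is that of `N(a, I)`. -/
lemma integral_shift_charFun (a t : E) :
    ∫ z, shiftDensity a z • Complex.exp (⟪z, t⟫ * Complex.I) ∂(stdGaussian E)
      = Complex.exp (⟪a, t⟫ * Complex.I - ‖t‖ ^ 2 / 2) := by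
  rw [stdGaussian_eq_map, integral_map (by fun_prop) (by fun_prop)]
  have h1 : ∀ z : Fin 3 → ℝ, shiftDensity a (WithLp.toLp 2 z) •
      Complex.exp (⟪(WithLp.toLp 2 z : E), t⟫ * Complex.I) =
      ∏ i, (Complex.exp (-(a i) ^ 2 / 2) * Complex.exp ((a i + t i * Complex.I) * z i)) := by
    intro z
    rw [shiftDensity, EuclideanSpace.real_norm_sq_eq, Complex.real_smul, Complex.ofReal_exp,
      ← Complex.exp_add]
    simp_rw [← Complex.exp_add]
    rw [← Complex.exp_sum]
    congr 1
    simp only [PiLp.inner_apply, Fin.sum_univ_three, RCLike.inner_apply, conj_trivial]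
    push_cast
    ring
  simp_rw [h1]
  rw [integral_fintype_prod_eq_prod (f := fun i (x : ℝ) =>
    (Complex.exp (-(a i) ^ 2 / 2) * Complex.exp ((a i + t i * Complex.I) * x)))]
  have h2 : ∀ i, ∫ x : ℝ, Complex.exp (-(a i) ^ 2 / 2) *
      Complex.exp ((a i + t i * Complex.I) * x) ∂(gaussianReal 0 1) =
      Complex.exp (a i * t i * Complex.I - t i ^ 2 / 2) := by
    intro i
    rw [integral_const_mul]
    have := complexMGF_id_gaussianReal (μ := 0) (v := 1) (a i + t i * Complex.I)
    simp only [complexMGF, id] at this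
    rw [this, ← Complex.exp_add]
    congr 1
    push_cast
    linear_combination ((t i : ℂ) ^ 2 / 2) * Complex.I_sq
  simp_rw [h2]
  rw [← Complex.exp_sum]
  congr 1
  have h3 := EuclideanSpace.real_norm_sq_eq t
  rw [← Complex.ofReal_pow, h3]
  simp only [PiLp.inner_apply, Fin.sum_univ_three, RCLike.inner_apply, conj_trivial]
  push_cast
  ring

lemma integral_shiftDensity_aux (a : E) :
    Integrable (shiftDensity a) (stdGaussian E) ∧
      ∫ z, shiftDensity a z ∂(stdGaussian E) = 1 := by
  have h := integral_shift_charFun a 0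
  simp only [inner_zero_right, norm_zero] at h
  have h' : ∫ z, ((shiftDensity a z : ℝ) : ℂ) ∂(stdGaussian E) = 1 := by
    simpa using h
  rw [integral_complex_ofReal] at h'
  have h2 : ∫ z, shiftDensity a z ∂(stdGaussian E) = 1 := by exact_mod_cast h'
  refine ⟨?_, h2⟩
  by_contra hc
  rw [integral_undef hc] at h2
  norm_num at h2

lemma integrable_shiftDensity (a : E) : Integrable (shiftDensity a) (stdGaussian E) :=
  (integral_shiftDensity_aux a).1

lemma integral_shiftDensity (a : E) : ∫ z, shiftDensity a z ∂(stdGaussian E) = 1 :=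
  (integral_shiftDensity_aux a).2

/-- Cameron–Martin formula: translating the Gaussian amounts to reweighting it. -/
lemma map_add_eq_withDensity (a : E) :
    (stdGaussian E).map (fun z => a + z) =
      (stdGaussian E).withDensity (fun z => ENNReal.ofReal (shiftDensity a z)) := by
  have hfin : IsFiniteMeasure ((stdGaussian E).withDensity
      (fun z => ENNReal.ofReal (shiftDensity a z))) :=
    isFiniteMeasure_withDensity_ofReal (integrable_shiftDensity a).2
  have : IsProbabilityMeasure ((stdGaussian E).map (fun z => a + z)) :=
    Measure.isProbabilityMeasure_map (by fun_prop)
  apply Measure.ext_of_charFun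
  ext t
  rw [charFun_apply, charFun_apply, integral_withDensity_eq_integral_toReal_smul
    (by fun_prop) (by simp)]
  simp_rw [ENNReal.toReal_ofReal (shiftDensity_pos a _).le]
  rw [integral_shift_charFun, integral_map (by fun_prop) (by fun_prop)]
  have : ∀ z : E, Complex.exp (⟪a + z, t⟫ * Complex.I) =
      Complex.exp (⟪a, t⟫ * Complex.I) * Complex.exp (⟪z, t⟫ * Complex.I) := by
    intro z
    rw [inner_add_left, ← Complex.exp_add]
    push_cast
    ring_nf
  simp_rw [this]
  rw [integral_const_mul, ← charFun_apply, charFun_stdGaussian, ← Complex.exp_add]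
  ring_nf

lemma integral_shift (a : E) {ψ : E → ℝ} (hψ : Measurable ψ) :
    ∫ z, ψ (a + z) ∂(stdGaussian E) = ∫ z, shiftDensity a z * ψ z ∂(stdGaussian E) := by
  rw [← integral_map (φ := fun z => a + z) (f := ψ) (by fun_prop)
    hψ.aestronglyMeasurable, map_add_eq_withDensity,
    integral_withDensity_eq_integral_toReal_smul (by fun_prop) (by simp)]
  simp_rw [ENNReal.toReal_ofReal (shiftDensity_pos a _).le, smul_eq_mul]

/-- The envelope `(1 + ‖z‖)³ exp(1 + ‖z‖)` entering the bound for the Taylor remainder of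
the shift density. -/
noncomputable def envelope (z : E) : ℝ := (1 + ‖z‖) ^ 3 * Real.exp (1 + ‖z‖)

lemma integrable_envelope : Integrable envelope (stdGaussian E) := by
  obtain ⟨C, hC, hint⟩ := IsGaussian.exists_integrable_exp_sq (stdGaussian E)
  refine (hint.const_mul (6 * Real.exp (2 + 1 / C))).mono' (by unfold envelope; fun_prop) ?_
  filter_upwards with z
  have hz := norm_nonneg z
  rw [Real.norm_of_nonneg (by unfold envelope; positivity), envelope]
  have h1 : (1 + ‖z‖) ^ 3 ≤ 6 * Real.exp (1 + ‖z‖) := by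
    have := Real.pow_div_factorial_le_exp (1 + ‖z‖) (by positivity) 3
    norm_num [Nat.factorial] at this
    linarith
  calc (1 + ‖z‖) ^ 3 * Real.exp (1 + ‖z‖)
      ≤ 6 * Real.exp (1 + ‖z‖) * Real.exp (1 + ‖z‖) := by gcongr
    _ = 6 * Real.exp (2 + 2 * ‖z‖) := by rw [mul_assoc, ← Real.exp_add]; ring_nf
    _ ≤ 6 * Real.exp (2 + 1 / C + C * ‖z‖ ^ 2) := by
        refine mul_le_mul_of_nonneg_left (Real.exp_le_exp.2 ?_) (by norm_num)
        have : 1 / C + C * ‖z‖ ^ 2 - 2 * ‖z‖ = (1 - C * ‖z‖) ^ 2 / C := by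
          field_simp; ring
        have : 0 ≤ (1 - C * ‖z‖) ^ 2 / C := by positivity
        linarith
    _ = _ := by rw [Real.exp_add]; ring

/-! ### Taylor expansion of Gaussian smoothings -/

lemma abs_exp_taylor_two (x : ℝ) : |Real.exp x - (1 + x + x ^ 2 / 2)| ≤ |x| ^ 3 * Real.exp |x| := by
  have h := Complex.norm_exp_sub_sum_le_norm_mul_exp (x : ℂ) 3
  simp only [Finset.sum_range_succ, Finset.sum_range_zero] at h
  norm_num [Nat.factorial] at h
  rw [← Real.norm_eq_abs, ← Complex.norm_real]
  push_cast
  exact h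

lemma envelope_ge (z : E) : (1 + ‖z‖) ^ 3 ≤ envelope z := by
  unfold envelope
  have : 1 ≤ Real.exp (1 + ‖z‖) := Real.one_le_exp (by positivity)
  exact le_mul_of_one_le_right (by positivity) this

/-- Second-order Taylor remainder of the shift density at the origin, dominated by `‖a‖³` times an
integrable function whose integral does not depend on `a`. -/
lemma shiftDensity_taylor (a z : E) :
    |shiftDensity a z - (1 + ⟪a, z⟫ + (⟪a, z⟫ ^ 2 - ‖a‖ ^ 2) / 2)| ≤
      ‖a‖ ^ 3 * (shiftDensity a z + 2 * envelope z) := by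
  have hin : |⟪a, z⟫| ≤ ‖a‖ * ‖z‖ := abs_real_inner_le_norm a z
  have hpos := shiftDensity_pos a z
  have henv := envelope_ge z
  have ha := norm_nonneg a
  have hz := norm_nonneg z
  set u := ⟪a, z⟫ with hu
  set α := ‖a‖ with hα
  set ζ := ‖z‖ with hζ
  have hu2 : u ^ 2 ≤ (α * ζ) ^ 2 := sq_le_sq' (by linarith [abs_le.1 hin]) (abs_le.1 hin).2
  rcases le_total 1 α with h1 | h1
  · have hα3 : 1 ≤ α ^ 3 := one_le_pow₀ h1
    have hα1 : α ≤ α ^ 3 := le_self_pow₀ h1 (by norm_num)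
    have hα2 : α ^ 2 ≤ α ^ 3 := pow_le_pow_right₀ h1 (by norm_num)
    have e1 : |shiftDensity a z - (1 + u + (u ^ 2 - α ^ 2) / 2)| ≤
        shiftDensity a z + (1 + α * ζ + ((α * ζ) ^ 2 + α ^ 2) / 2) := by
      rw [abs_le] at hin ⊢
      constructor <;> nlinarith [sq_nonneg u, sq_nonneg α, sq_nonneg (α * ζ)]
    have e2 : 1 + α * ζ + ((α * ζ) ^ 2 + α ^ 2) / 2 ≤ α ^ 3 * (2 * (1 + ζ) ^ 3) := by
      have e3 : 1 + α * ζ + ((α * ζ) ^ 2 + α ^ 2) / 2 ≤ α ^ 3 * (1 + ζ + (ζ ^ 2 + 1) / 2) := by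
        have : α * ζ ≤ α ^ 3 * ζ := by gcongr
        have : α ^ 2 * ζ ^ 2 ≤ α ^ 3 * ζ ^ 2 := by gcongr
        nlinarith
      refine e3.trans ?_
      gcongr
      nlinarith [pow_nonneg hz 3, pow_nonneg hz 2]
    have e4 : shiftDensity a z ≤ α ^ 3 * shiftDensity a z := le_mul_of_one_le_left hpos.le hα3
    have e5 : α ^ 3 * (2 * (1 + ζ) ^ 3) ≤ α ^ 3 * (2 * envelope z) := by gcongr
    linarith
  · set x := u - α ^ 2 / 2 with hx
    have hα2 : α ^ 2 ≤ α := by nlinarith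
    have hxb : |x| ≤ α * (1 + ζ) := by
      rw [abs_le] at hin ⊢
      constructor <;> nlinarith
    have hxb' : |x| ≤ 1 + ζ := hxb.trans (by nlinarith)
    have ht := abs_exp_taylor_two x
    have h3 : |x| ^ 3 * Real.exp |x| ≤ α ^ 3 * envelope z := by
      calc |x| ^ 3 * Real.exp |x| ≤ (α * (1 + ζ)) ^ 3 * Real.exp (1 + ζ) := by gcongr
        _ = α ^ 3 * envelope z := by rw [envelope]; ring
    have e1 : |(-u * α ^ 2 / 2 + α ^ 4 / 8)| ≤ α ^ 3 * (1 + ζ) ^ 3 := by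
      have f1 : |u * α ^ 2| ≤ α ^ 3 * ζ := by
        rw [abs_mul, abs_of_nonneg (sq_nonneg α)]
        nlinarith [sq_nonneg α]
      have f2 : α ^ 4 ≤ α ^ 3 := by
        have := pow_nonneg ha 3
        nlinarith
      have f3 : 0 ≤ α ^ 4 := by positivity
      have f4 : (1 + ζ) ≤ (1 + ζ) ^ 3 := by nlinarith [pow_nonneg hz 3, pow_nonneg hz 2]
      have f5 : α ^ 3 * (1 + ζ) ≤ α ^ 3 * (1 + ζ) ^ 3 := by gcongr
      have := pow_nonneg ha 3
      rw [abs_le] at f1 ⊢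
      constructor <;> nlinarith
    have e2 : shiftDensity a z - (1 + u + (u ^ 2 - α ^ 2) / 2) =
        (Real.exp x - (1 + x + x ^ 2 / 2)) + (-u * α ^ 2 / 2 + α ^ 4 / 8) := by
      rw [shiftDensity, ← hu, ← hα, ← hx]
      rw [hx]; ring
    rw [e2]
    have e3 := abs_add_le (Real.exp x - (1 + x + x ^ 2 / 2)) (-u * α ^ 2 / 2 + α ^ 4 / 8)
    have e4 : α ^ 3 * (1 + ζ) ^ 3 ≤ α ^ 3 * envelope z := by gcongr
    have e5 : 0 ≤ α ^ 3 * shiftDensity a z := by positivity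
    nlinarith

/-- The integral against `N(0, I)` of the factor `shiftDensity a + 2 envelope` from
`shiftDensity_taylor`, which is the same for all `a`. -/
noncomputable def smoothConst : ℝ := 1 + 2 * ∫ z, envelope z ∂(stdGaussian E)

lemma smoothConst_pos : 0 < smoothConst := by
  have : 0 ≤ ∫ z, envelope z ∂(stdGaussian E) :=
    integral_nonneg fun z => by unfold envelope; positivity
  unfold smoothConst; linarith

lemma abs_apply_le_norm (z : E) (i : Fin 3) : |z i| ≤ ‖z‖ := by
  simpa using PiLp.norm_apply_le z i

lemma integrable_of_envelope {f : E → ℝ} (hf : Measurable f) (c : ℝ)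
    (h : ∀ z, |f z| ≤ c * (1 + ‖z‖) ^ 3) : Integrable f (stdGaussian E) := by
  have hc : 0 ≤ c := by
    have := (abs_nonneg _).trans (h 0)
    simpa using this
  refine (integrable_envelope.const_mul c).mono' hf.aestronglyMeasurable ?_
  filter_upwards with z
  exact (h z).trans (mul_le_mul_of_nonneg_left (envelope_ge z) hc)

/-- Gaussian smoothing at scale `r` makes a bounded function `ψ` equal to a quadratic polynomial
up to an error of order `(‖y‖ / r)³`. -/
lemma smooth_taylor {ψ : E → ℝ} (hψ : Measurable ψ) {B : ℝ} (hB : ∀ x, |ψ x| ≤ B) {r : ℝ}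
    (hr : 0 < r) :
    ∃ (c : ℝ) (b : Fin 3 → ℝ) (q : Fin 3 → Fin 3 → ℝ), ∀ y : E,
      |∫ z, ψ (y + r • z) ∂(stdGaussian E) - (c + ∑ i, b i * y i + ∑ i, ∑ j, q i j * (y i * y j))|
        ≤ smoothConst * B * (‖y‖ / r) ^ 3 := by
  have hB0 : 0 ≤ B := (abs_nonneg _).trans (hB 0)
  set φ : E → ℝ := fun z => ψ (r • z) with hφ
  have hφm : Measurable φ := hψ.comp (by fun_prop)
  have hφB : ∀ z, |φ z| ≤ B := fun z => hB _
  have i0 : Integrable φ (stdGaussian E) :=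
    integrable_of_envelope hφm B fun z => (hφB z).trans (le_mul_of_one_le_right hB0
      (one_le_pow₀ (by linarith [norm_nonneg z])))
  have i1 : ∀ i, Integrable (fun z => φ z * z i) (stdGaussian E) := fun i =>
    integrable_of_envelope (by fun_prop) B fun z => by
      rw [abs_mul]
      have := norm_nonneg z
      have := abs_apply_le_norm z i
      have h3 : |z i| ≤ (1 + ‖z‖) ^ 3 := by nlinarith [pow_nonneg (norm_nonneg z) 3]
      exact mul_le_mul (hφB z) h3 (abs_nonneg _) hB0
  have i2 : ∀ i j, Integrable (fun z => φ z * (z i * z j - if i = j then 1 else 0))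
      (stdGaussian E) := fun i j =>
    integrable_of_envelope (by fun_prop) B fun z => by
      rw [abs_mul]
      have hn := norm_nonneg z
      have h1 := abs_apply_le_norm z i
      have h2 := abs_apply_le_norm z j
      have h3 : |z i * z j - if i = j then 1 else 0| ≤ (1 + ‖z‖) ^ 3 := by
        refine (abs_sub _ _).trans ?_
        have : |(if i = j then (1 : ℝ) else 0)| ≤ 1 := by split_ifs <;> simp
        rw [abs_mul]
        have := mul_le_mul h1 h2 (abs_nonneg _) hn
        nlinarith [pow_nonneg hn 3, pow_nonneg hn 2]
      exact mul_le_mul (hφB z) h3 (abs_nonneg _) hB0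
  refine ⟨∫ z, φ z ∂(stdGaussian E), fun i => r⁻¹ * ∫ z, φ z * z i ∂(stdGaussian E),
    fun i j => (r⁻¹ ^ 2 / 2) * ∫ z, φ z * (z i * z j - if i = j then 1 else 0) ∂(stdGaussian E),
    fun y => ?_⟩
  set a : E := r⁻¹ • y with ha
  have hna : ‖a‖ = ‖y‖ / r := by
    rw [ha, norm_smul, norm_inv, Real.norm_of_nonneg hr.le]; field_simp
  have hshift : ∫ z, ψ (y + r • z) ∂(stdGaussian E) =
      ∫ z, shiftDensity a z * φ z ∂(stdGaussian E) := by
    rw [← integral_shift a hφm]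
    congr 1; ext z
    simp only [hφ, ha, smul_add, smul_smul, mul_inv_cancel₀ hr.ne', one_smul]
  have hpoly : (∫ z, φ z ∂(stdGaussian E)) + ∑ i, (r⁻¹ * ∫ z, φ z * z i ∂(stdGaussian E)) * y i +
      ∑ i, ∑ j, ((r⁻¹ ^ 2 / 2) *
        ∫ z, φ z * (z i * z j - if i = j then 1 else 0) ∂(stdGaussian E)) * (y i * y j) =
      ∫ z, (1 + ⟪a, z⟫ + (⟪a, z⟫ ^ 2 - ‖a‖ ^ 2) / 2) * φ z ∂(stdGaussian E) := by
    have e : ∀ z : E, (1 + ⟪a, z⟫ + (⟪a, z⟫ ^ 2 - ‖a‖ ^ 2) / 2) * φ z =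
        φ z + ∑ i, (r⁻¹ * y i) * (φ z * z i) + ∑ i, ∑ j, (r⁻¹ ^ 2 / 2 * (y i * y j)) *
          (φ z * (z i * z j - if i = j then 1 else 0)) := by
      intro z
      rw [EuclideanSpace.real_norm_sq_eq]
      simp only [PiLp.inner_apply, Fin.sum_univ_three, RCLike.inner_apply, conj_trivial, ha,
        PiLp.smul_apply, smul_eq_mul]
      simp
      ring
    simp_rw [e]
    rw [integral_add, integral_add i0, integral_finsetSum, integral_finsetSum]
    · congr 1
      · congr 1
        refine Finset.sum_congr rfl fun i _ => ?_
        rw [integral_const_mul]; ring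
      · refine Finset.sum_congr rfl fun i _ => ?_
        rw [integral_finsetSum _ fun j _ => (i2 i j).const_mul _]
        refine Finset.sum_congr rfl fun j _ => ?_
        rw [integral_const_mul]; ring
    · exact fun i _ => integrable_finsetSum _ fun j _ => (i2 i j).const_mul _
    · exact fun i _ => (i1 i).const_mul _
    · exact integrable_finsetSum _ fun i _ => (i1 i).const_mul _
    · exact i0.add (integrable_finsetSum _ fun i _ => (i1 i).const_mul _)
    · exact integrable_finsetSum _ fun i _ => integrable_finsetSum _ fun j _ =>
        (i2 i j).const_mul _
  have iS : Integrable (fun z => shiftDensity a z * φ z) (stdGaussian E) :=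
    (integrable_shiftDensity a).mul_bdd (c := B) hφm.aestronglyMeasurable (by
      filter_upwards with z; exact hφB z)
  have iP : Integrable (fun z => (1 + ⟪a, z⟫ + (⟪a, z⟫ ^ 2 - ‖a‖ ^ 2) / 2) * φ z)
      (stdGaussian E) := by
    refine Integrable.mul_bdd (c := B) ?_ hφm.aestronglyMeasurable (by
      filter_upwards with z; exact hφB z)
    have hd : Integrable (fun z => shiftDensity a z + ‖a‖ ^ 3 * (shiftDensity a z + 2 * envelope z))
        (stdGaussian E) :=
      (integrable_shiftDensity a).add (((integrable_shiftDensity a).add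
        (integrable_envelope.const_mul 2)).const_mul _)
    refine hd.mono' (by fun_prop) ?_
    filter_upwards with z
    have h1 := shiftDensity_taylor a z
    have h2 := shiftDensity_pos a z
    rw [Real.norm_eq_abs]
    rw [abs_le] at h1 ⊢
    constructor <;> linarith
  rw [hpoly, hshift, ← integral_sub iS iP]
  have hb : Integrable (fun z => ‖a‖ ^ 3 * (shiftDensity a z + 2 * envelope z) * B)
      (stdGaussian E) :=
    ((((integrable_shiftDensity a).add (integrable_envelope.const_mul 2)).const_mul _).mul_const B)
  have hfin := norm_integral_le_of_norm_le (f := fun z => shiftDensity a z * φ z -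
    (1 + ⟪a, z⟫ + (⟪a, z⟫ ^ 2 - ‖a‖ ^ 2) / 2) * φ z) hb (by
      filter_upwards with z
      rw [← sub_mul, norm_mul]
      exact mul_le_mul (shiftDensity_taylor a z) (hφB z) (norm_nonneg _)
        ((abs_nonneg _).trans (shiftDensity_taylor a z)))
  rw [Real.norm_eq_abs] at hfin
  refine hfin.trans (le_of_eq ?_)
  rw [integral_mul_const, integral_const_mul, integral_add (integrable_shiftDensity a)
    (integrable_envelope.const_mul 2), integral_const_mul, integral_shiftDensity, hna, smoothConst]
  ring

/-! ### Lindeberg replacement on wedges -/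

/-- A probability law on `E` with zero mean, identity covariance and finite third moment. -/
structure Isotropic (Q : Measure E) : Prop where
  prob : IsProbabilityMeasure Q
  third : Integrable (fun y => ‖y‖ ^ 3) Q
  mean : ∀ i, ∫ y, y i ∂Q = 0
  cov : ∀ i j, ∫ y, y i * y j ∂Q = if i = j then 1 else 0

lemma isotropic_stdGaussian : Isotropic (stdGaussian E) where
  prob := inferInstance
  third := integrable_of_envelope (by fun_prop) 1 fun z => by
    have := norm_nonneg z
    rw [abs_of_nonneg (by positivity), one_mul]
    gcongr; linarith
  mean i := by
    have := integral_strongDual_stdGaussian (E := E) (EuclideanSpace.proj i)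
    simpa using this
  cov i j := by
    have h := covariance_eval_multivariateGaussian (μ := (0 : E)) (S := (1 : Matrix (Fin 3) (Fin 3) ℝ))
      Matrix.PosSemidef.one i j
    rw [multivariateGaussian_zero_one, covariance] at h
    have hm : ∀ i : Fin 3, ∫ x : E, x i ∂(stdGaussian E) = 0 := fun i => by
      have := integral_strongDual_stdGaussian (E := E) (EuclideanSpace.proj i)
      simpa using this
    simpa [hm, Matrix.one_apply] using h

lemma Isotropic.integrable_of_le {Q : Measure E} (hQ : Isotropic Q) {f : E → ℝ}
    (hf : Measurable f) (c : ℝ) (h : ∀ y, |f y| ≤ c * (1 + ‖y‖ ^ 3)) : Integrable f Q := by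
  have := hQ.prob
  exact (((integrable_const 1).add hQ.third).const_mul c).mono' hf.aestronglyMeasurable
    (by filter_upwards with y; exact h y)

lemma Isotropic.integrable_eval {Q : Measure E} (hQ : Isotropic Q) (i : Fin 3) :
    Integrable (fun y : E => y i) Q :=
  hQ.integrable_of_le (by fun_prop) 1 fun y => by
    have h1 := abs_apply_le_norm y i
    have h2 := norm_nonneg y
    nlinarith [mul_nonneg h2 (sq_nonneg (‖y‖ - 1)), sq_nonneg (‖y‖ - 1)]

lemma Isotropic.integrable_mul {Q : Measure E} (hQ : Isotropic Q) (i j : Fin 3) :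
    Integrable (fun y : E => y i * y j) Q :=
  hQ.integrable_of_le (by fun_prop) 1 fun y => by
    have h1 := mul_le_mul (abs_apply_le_norm y i) (abs_apply_le_norm y j) (abs_nonneg _)
      (norm_nonneg y)
    have h2 := norm_nonneg y
    rw [abs_mul]
    nlinarith [mul_nonneg h2 (sq_nonneg (‖y‖ - 1)), sq_nonneg (‖y‖ - 1)]

/-- Third absolute moment. -/
noncomputable def thirdMoment (Q : Measure E) : ℝ := ∫ y, ‖y‖ ^ 3 ∂Q

lemma thirdMoment_nonneg (Q : Measure E) : 0 ≤ thirdMoment Q :=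
  integral_nonneg fun y => by positivity

lemma integrable_bdd {μ : Measure E} [IsFiniteMeasure μ] {ψ : E → ℝ} (hψ : Measurable ψ) {B : ℝ}
    (hB : ∀ x, |ψ x| ≤ B) : Integrable ψ μ :=
  (integrable_const B).mono' hψ.aestronglyMeasurable (by filter_upwards with x; exact hB x)

lemma integral_conv_gs {Q : Measure E} [IsProbabilityMeasure Q] {ψ : E → ℝ} (hψ : Measurable ψ)
    {B : ℝ} (hB : ∀ x, |ψ x| ≤ B) (r : ℝ) :
    ∫ x, ψ x ∂(Q ∗ gs r) = ∫ y, ∫ z, ψ (y + r • z) ∂(stdGaussian E) ∂Q := by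
  rw [integral_conv (integrable_bdd hψ hB)]
  congr 1; ext y
  rw [gs, integral_map (f := fun w => ψ (y + w)) (by fun_prop)
    (hψ.comp (by fun_prop)).aestronglyMeasurable]

/-- The second-order Taylor polynomial of a Gaussian-smoothed function has the same integral under
any two isotropic laws; only the third-order remainder distinguishes them. -/
lemma swap_bound {Q : Measure E} (hQ : Isotropic Q) {ψ : E → ℝ} (hψ : Measurable ψ) {B : ℝ}
    (hB : ∀ x, |ψ x| ≤ B) {r : ℝ} (hr : 0 < r) :
    |∫ x, ψ x ∂(Q ∗ gs r) - ∫ x, ψ x ∂(stdGaussian E ∗ gs r)| ≤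
      smoothConst * B * (r ^ 3)⁻¹ * (thirdMoment Q + thirdMoment (stdGaussian E)) := by
  obtain ⟨c, b, q, h⟩ := smooth_taylor hψ hB hr
  have key : ∀ R : Measure E, Isotropic R →
      |∫ x, ψ x ∂(R ∗ gs r) - (c + ∑ i, q i i)| ≤
        smoothConst * B * (r ^ 3)⁻¹ * thirdMoment R := by
    intro R hR
    have := hR.prob
    rw [integral_conv_gs hψ hB]
    have hpi : Integrable (fun y : E => c + ∑ i, b i * y i + ∑ i, ∑ j, q i j * (y i * y j)) R := by
      refine ((integrable_const c).add (integrable_finsetSum _ fun i _ => ?_)).add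
        (integrable_finsetSum _ fun i _ => integrable_finsetSum _ fun j _ => ?_)
      · exact (hR.integrable_eval i).const_mul _
      · exact (hR.integrable_mul i j).const_mul _
    have hp : ∫ y : E, (c + ∑ i, b i * y i + ∑ i, ∑ j, q i j * (y i * y j)) ∂(R) =
        c + ∑ i, q i i := by
      rw [integral_add, integral_add, integral_finsetSum, integral_finsetSum]
      · simp_rw [integral_const_mul, hR.mean]
        have : ∀ i, ∫ y : E, ∑ j, q i j * (y i * y j) ∂(R) = q i i := by
          intro i
          rw [integral_finsetSum _ fun j _ => (hR.integrable_mul i j).const_mul _]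
          simp_rw [integral_const_mul, hR.cov]
          simp
        simp_rw [this]
        simp
      · exact fun i _ => integrable_finsetSum _ fun j _ => (hR.integrable_mul i j).const_mul _
      · exact fun i _ => (hR.integrable_eval i).const_mul _
      · exact integrable_const c
      · exact integrable_finsetSum _ fun i _ => (hR.integrable_eval i).const_mul _
      · exact (integrable_const c).add
          (integrable_finsetSum _ fun i _ => (hR.integrable_eval i).const_mul _)
      · exact integrable_finsetSum _ fun i _ => integrable_finsetSum _ fun j _ =>
          (hR.integrable_mul i j).const_mul _
    have hI : Integrable (fun y => ∫ z, ψ (y + r • z) ∂(stdGaussian E)) R := by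
      refine integrable_bdd (B := B) ?_ ?_
      · refine (StronglyMeasurable.integral_prod_right
          (f := fun (y z : E) => ψ (y + r • z)) ?_).measurable
        exact (hψ.comp (by fun_prop)).stronglyMeasurable
      · intro y
        have := norm_integral_le_of_norm_le_const (μ := stdGaussian E) (C := B)
          (f := fun z => ψ (y + r • z)) (by filter_upwards with z; exact hB _)
        simpa using this
    rw [← hp, ← integral_sub hI hpi]
    have hb : Integrable (fun y : E => smoothConst * B * (‖y‖ / r) ^ 3) R := by
      simp_rw [div_pow]
      exact (hR.third.div_const _).const_mul _
    refine (norm_integral_le_of_norm_le (f := fun y => ∫ z, ψ (y + r • z) ∂(stdGaussian E) -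
      (c + ∑ i, b i * y i + ∑ i, ∑ j, q i j * (y i * y j))) hb
      (by filter_upwards with y; exact h y)).trans (le_of_eq ?_)
    simp_rw [div_pow, integral_const_mul, integral_div, thirdMoment]
    ring
  have h1 := key Q hQ
  have h2 := key _ isotropic_stdGaussian
  rw [abs_le] at h1 h2 ⊢
  constructor <;> linarith

/-- `n`-fold convolution power: the law of a sum of `n` independent copies. -/
noncomputable def convPow (Q : Measure E) : ℕ → Measure E
  | 0 => Measure.dirac 0
  | n + 1 => convPow Q n ∗ Q

instance (Q : Measure E) [IsProbabilityMeasure Q] (n : ℕ) : IsProbabilityMeasure (convPow Q n) := by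
  induction n with
  | zero => rw [convPow]; infer_instance
  | succ n ih => rw [convPow]; infer_instance

/-- The intersection of the three half-spaces `⟪v i, x⟫ ≤ z i`. -/
def wedge (v : Fin 3 → E) (z : Fin 3 → ℝ) : Set E := {x | ∀ i, ⟪v i, x⟫ ≤ z i}

@[measurability]
lemma measurableSet_wedge (v : Fin 3 → E) (z : Fin 3 → ℝ) : MeasurableSet (wedge v z) := by
  unfold wedge
  rw [Set.ofPred_forall]
  exact MeasurableSet.iInter fun i => measurableSet_le (by fun_prop) (by fun_prop)

lemma wedge_mono (v : Fin 3 → E) {z z' : Fin 3 → ℝ} (h : ∀ i, z i ≤ z' i) :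
    wedge v z ⊆ wedge v z' := fun _ hx i => (hx i).trans (h i)

lemma measurable_shift_real (v : Fin 3 → E) (z : Fin 3 → ℝ) (μ : Measure E)
    [IsProbabilityMeasure μ] :
    Measurable (fun x : E => μ.real (wedge v (fun i => z i - ⟪v i, x⟫))) := by
  have hS : MeasurableSet {p : E × E | p.1 + p.2 ∈ wedge v z} :=
    (measurableSet_wedge v z).preimage (by fun_prop)
  have := (measurable_measure_prodMk_left (ν := μ) hS).ennreal_toReal
  convert this using 1
  ext x
  unfold Measure.real
  congr 2
  ext w
  simp only [wedge, Set.mem_ofPred_eq, Set.mem_preimage, inner_add_right]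
  exact forall_congr' fun i => ⟨fun h => by linarith, fun h => by linarith⟩

/-- Translating a wedge only moves its corner, so the mass that a convolution gives to a wedge is an
average over corners. -/
lemma conv_real_wedge (v : Fin 3 → E) (z : Fin 3 → ℝ) (μ ν : Measure E)
    [IsProbabilityMeasure μ] [IsProbabilityMeasure ν] :
    (μ ∗ ν).real (wedge v z) = ∫ x, μ.real (wedge v (fun i => z i - ⟪v i, x⟫)) ∂ν := by
  rw [Measure.conv_comm, ← integral_indicator_one (measurableSet_wedge v z), integral_conv]
  · congr 1; ext x
    rw [← integral_indicator_one (measurableSet_wedge v _)]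
    congr 1; ext w
    simp only [Set.indicator, wedge, Set.mem_ofPred_eq, inner_add_right]
    congr 1
    exact propext (forall_congr' fun i => ⟨fun h => by linarith, fun h => by linarith⟩)
  · exact (integrable_const (1 : ℝ)).indicator (measurableSet_wedge v z)

lemma abs_real_sub_le_one (μ ν : Measure E) [IsProbabilityMeasure μ] [IsProbabilityMeasure ν]
    (S : Set E) : |μ.real S - ν.real S| ≤ 1 := by
  have h1 : μ.real S ≤ 1 := measureReal_le_one
  have h2 : ν.real S ≤ 1 := measureReal_le_one
  have h3 : 0 ≤ μ.real S := measureReal_nonneg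
  have h4 : 0 ≤ ν.real S := measureReal_nonneg
  rw [abs_le]; constructor <;> linarith

/-- Replacing one summand by a Gaussian. The contribution of `μ - N(0, s² I)` is at most `D` times
the smoothing factor of the Gaussian part already present; the contribution of `N(0, s² I)` itself
benefits from the smoothing by the whole variance `t²`. -/
lemma lindeberg_step {Q : Measure E} (hQ : Isotropic Q) (v : Fin 3 → E) (z : Fin 3 → ℝ)
    (μ : Measure E) [IsProbabilityMeasure μ] {r s t D : ℝ} (hr : 0 < r) (ht : 0 < t)
    (hst : s ^ 2 + r ^ 2 = t ^ 2)
    (hD : ∀ z, |μ.real (wedge v z) - (gs s).real (wedge v z)| ≤ D) :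
    |(μ ∗ (Q ∗ gs r)).real (wedge v z) - (μ ∗ (stdGaussian E ∗ gs r)).real (wedge v z)| ≤
      smoothConst * (thirdMoment Q + thirdMoment (stdGaussian E)) *
        (D * (r ^ 3)⁻¹ + (t ^ 3)⁻¹) := by
  have := hQ.prob
  -- `f - g` is uniformly at most `D`, while `g` is already a smoothing at scale `s` of an
  -- indicator function.
  set f : E → ℝ := fun x => μ.real (wedge v (fun i => z i - ⟪v i, x⟫)) with hf
  set g : E → ℝ := fun x => (gs s).real (wedge v (fun i => z i - ⟪v i, x⟫)) with hg
  have hfm : Measurable f := measurable_shift_real v z μ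
  have hgm : Measurable g := measurable_shift_real v z (gs s)
  have hg1 : ∀ x, |g x| ≤ 1 := fun x => by
    rw [abs_of_nonneg measureReal_nonneg]; exact measureReal_le_one
  have hf1 : ∀ x, |f x| ≤ 1 := fun x => by
    rw [abs_of_nonneg measureReal_nonneg]; exact measureReal_le_one
  have h1 := swap_bound hQ (ψ := fun x => f x - g x) (hfm.sub hgm) (fun x => hD _) hr
  have hind : Measurable ((wedge v z).indicator (1 : E → ℝ)) :=
    measurable_one.indicator (measurableSet_wedge v z)
  have h2 := swap_bound hQ (ψ := (wedge v z).indicator 1) hind (B := 1) (fun x => by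
    by_cases hx : x ∈ wedge v z <;> simp [hx]) ht
  have e : ∀ R : Measure E, IsProbabilityMeasure R → ∫ x, g x ∂(R ∗ gs r) =
      ∫ x, (wedge v z).indicator 1 x ∂(R ∗ gs t) := by
    intro R hR
    rw [integral_indicator_one (measurableSet_wedge v z), ← conv_real_wedge, Measure.conv_comm R,
      ← Measure.conv_assoc, gs_conv hst, Measure.conv_comm]
  rw [integral_sub (integrable_bdd hfm hf1) (integrable_bdd hgm hg1),
    integral_sub (integrable_bdd hfm hf1) (integrable_bdd hgm hg1)] at h1
  rw [← e Q inferInstance, ← e _ inferInstance] at h2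
  rw [conv_real_wedge, conv_real_wedge]
  rw [abs_le] at h1 h2 ⊢
  constructor <;> linarith

/-! ### Removing the smoothing, and Gaussian anti-concentration -/

/-- If a family bounded by `1` satisfies a bound improving every uniform bound `B` to
`S + B / 3`, then `3 S / 2` is a uniform bound. -/
lemma self_improve {ι : Type*} [Nonempty ι] (d : ι → ℝ) (hd : ∀ z, d z ≤ 1) (S : ℝ)
    (h : ∀ B, (∀ z, d z ≤ B) → ∀ z, d z ≤ S + B / 3) (z : ι) : d z ≤ 3 / 2 * S := by
  have hb : BddAbove (Set.range d) := ⟨1, by rintro _ ⟨z, rfl⟩; exact hd z⟩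
  have h1 : ⨆ z, d z ≤ S + (⨆ z, d z) / 3 :=
    ciSup_le (h _ fun z => le_ciSup hb z)
  have h2 := le_ciSup hb z
  linarith

/-- Removal of the Gaussian smoothing `gs s`, for a comparison law `ν` that gives mass at most `κ`
to each collar of width `2 h`. A large discrepancy at one corner persists, by monotonicity, for all
translates by the box where `gs s` has mass `3 / 4`; the remaining mass `1 / 4` can only cancel a
fraction of the largest discrepancy. -/
lemma desmooth (v : Fin 3 → E) (μ ν : Measure E) [IsProbabilityMeasure μ] [IsProbabilityMeasure ν]
    {s h κ S : ℝ}
    (hsm : ∀ z, |(μ ∗ gs s).real (wedge v z) - (ν ∗ gs s).real (wedge v z)| ≤ S)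
    (hκ : ∀ z, ν.real (wedge v (fun i => z i + 2 * h)) ≤ ν.real (wedge v z) + κ)
    (hh : 3 / 4 ≤ (gs s).real {x | ∀ i, |⟪v i, x⟫| ≤ h}) (z : Fin 3 → ℝ) :
    |μ.real (wedge v z) - ν.real (wedge v z)| ≤ 3 / 2 * (4 / 3 * S + κ) := by
  refine self_improve (fun z => |μ.real (wedge v z) - ν.real (wedge v z)|)
    (fun z => abs_real_sub_le_one _ _ _) _ (fun B hB => ?_) z
  clear z
  have hS0 : 0 ≤ S := (abs_nonneg _).trans (hsm 0)
  have hB0 : 0 ≤ B := (abs_nonneg _).trans (hB 0)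
  set G : Set E := {x | ∀ i, |⟪v i, x⟫| ≤ h} with hG
  have hGm : MeasurableSet G := by
    rw [hG, Set.ofPred_forall]
    exact MeasurableSet.iInter fun i => measurableSet_le (by fun_prop) (by fun_prop)
  -- The sign `σ` covers both directions of the estimate: a lower bound `c` for the signed
  -- discrepancy on the whole box gives `S ≥ 3 / 4 * c - B / 4`.
  have main : ∀ (w : Fin 3 → ℝ) (σ c : ℝ), (σ = 1 ∨ σ = -1) →
      (∀ x ∈ G, c ≤ σ * (μ.real (wedge v (fun i => w i - ⟪v i, x⟫)) -
        ν.real (wedge v (fun i => w i - ⟪v i, x⟫)))) → c ≤ 4 / 3 * S + B / 3 := by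
    intro w σ c hσ hc
    by_contra! hcon
    have hc0 : 0 < c := by linarith
    set F : E → ℝ := fun x => σ * (μ.real (wedge v (fun i => w i - ⟪v i, x⟫)) -
        ν.real (wedge v (fun i => w i - ⟪v i, x⟫))) with hF
    have hi1 : Integrable (fun x => μ.real (wedge v (fun i => w i - ⟪v i, x⟫))) (gs s) :=
      integrable_bdd (measurable_shift_real v w μ) (B := 1) fun x => by
        rw [abs_of_nonneg measureReal_nonneg]; exact measureReal_le_one
    have hi2 : Integrable (fun x => ν.real (wedge v (fun i => w i - ⟪v i, x⟫))) (gs s) :=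
      integrable_bdd (measurable_shift_real v w ν) (B := 1) fun x => by
        rw [abs_of_nonneg measureReal_nonneg]; exact measureReal_le_one
    have hint : Integrable F (gs s) := (hi1.sub hi2).const_mul σ
    have hlow : ∀ x, G.indicator (fun _ => c + B) x - B ≤ F x := by
      intro x
      by_cases hx : x ∈ G
      · simpa [hx] using hc x hx
      · have := hB (fun i => w i - ⟪v i, x⟫)
        simp only [hx, not_false_eq_true, Set.indicator_of_notMem, zero_sub, hF]
        rw [abs_le] at this
        rcases hσ with rfl | rfl <;> linarith
    have h1 : ∫ x, (G.indicator (fun _ => c + B) x - B) ∂(gs s) ≤ ∫ x, F x ∂(gs s) :=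
      integral_mono (((integrable_const _).indicator hGm).sub (integrable_const _)) hint hlow
    rw [integral_sub ((integrable_const _).indicator hGm) (integrable_const _),
      integral_indicator_const _ hGm] at h1
    have h2 : ∫ x, F x ∂(gs s) ≤ S := by
      rw [hF, integral_const_mul, integral_sub hi1 hi2, ← conv_real_wedge, ← conv_real_wedge]
      have := hsm w
      rw [abs_le] at this
      rcases hσ with rfl | rfl <;> linarith
    simp only [integral_const, probReal_univ, smul_eq_mul, one_mul] at h1
    have h3 : 3 / 4 * (c + B) ≤ (gs s).real G * (c + B) := by
      gcongr
    linarith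
  intro z
  rw [abs_le]
  constructor
  · have := main (fun i => z i - h) (-1) (ν.real (wedge v z) - κ - μ.real (wedge v z))
      (Or.inr rfl) (fun x hx => by
        have h1 : μ.real (wedge v (fun i => z i - h - ⟪v i, x⟫)) ≤ μ.real (wedge v z) :=
          measureReal_mono (wedge_mono v fun i => by have := abs_le.1 (hx i); linarith)
        have h2 := hκ (fun i => z i - 2 * h)
        have h3 : ν.real (wedge v (fun i => z i - 2 * h)) ≤
            ν.real (wedge v (fun i => z i - h - ⟪v i, x⟫)) :=
          measureReal_mono (wedge_mono v fun i => by have := abs_le.1 (hx i); linarith)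
        simp only [sub_add_cancel] at h2
        linarith)
    linarith
  · have := main (fun i => z i + h) 1 (μ.real (wedge v z) - (ν.real (wedge v z) + κ))
      (Or.inl rfl) (fun x hx => by
        have h1 : μ.real (wedge v z) ≤ μ.real (wedge v (fun i => z i + h - ⟪v i, x⟫)) :=
          measureReal_mono (wedge_mono v fun i => by have := abs_le.1 (hx i); linarith)
        have h2 := hκ z
        have h3 : ν.real (wedge v (fun i => z i + h - ⟪v i, x⟫)) ≤
            ν.real (wedge v (fun i => z i + 2 * h)) :=
          measureReal_mono (wedge_mono v fun i => by have := abs_le.1 (hx i); linarith)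
        linarith)
    linarith

lemma inner_map_gs (r : ℝ) (u : E) :
    (gs r).map (fun x => ⟪u, x⟫) = gaussianReal 0 (Real.toNNReal ((r * ‖u‖) ^ 2)) := by
  have : IsProbabilityMeasure ((gs r).map (fun x => ⟪u, x⟫)) :=
    Measure.isProbabilityMeasure_map (by fun_prop)
  apply Measure.ext_of_charFun
  ext t
  rw [charFun_gaussianReal, charFun_apply, integral_map (by fun_prop) (by fun_prop)]
  have h := charFun_gs r (t • u)
  rw [charFun_apply] at h
  have e : ∀ x : E, ⟪(⟪u, x⟫ : ℝ), t⟫ = ⟪x, t • u⟫ := by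
    intro x
    rw [real_inner_smul_right, real_inner_comm x u]
    simp
  simp_rw [e]
  rw [h, norm_smul]
  congr 1
  rw [Real.coe_toNNReal _ (sq_nonneg _)]
  push_cast
  rw [mul_pow, Real.norm_eq_abs, ← Complex.ofReal_pow |t| 2, sq_abs]
  push_cast
  ring

lemma gaussianReal_Ioc_le {w : NNReal} {σ : ℝ} (hσ : 0 < σ) (hw : (w : ℝ) = σ ^ 2) (a b : ℝ)
    (hab : a ≤ b) : (gaussianReal 0 w).real (Set.Ioc a b) ≤ (b - a) / σ := by
  have hw0 : w ≠ 0 := by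
    intro h; rw [h, NNReal.coe_zero] at hw; have := pow_pos hσ 2; linarith
  rw [Measure.real, gaussianReal_apply_eq_integral _ hw0, ENNReal.toReal_ofReal
    (integral_nonneg fun x => gaussianPDFReal_nonneg _ _ _)]
  have hle : ∀ x, gaussianPDFReal 0 w x ≤ 1 / σ := by
    intro x
    rw [gaussianPDFReal]
    have h1 : Real.exp (-(x - 0) ^ 2 / (2 * w)) ≤ 1 :=
      Real.exp_le_one_iff.2 (div_nonpos_of_nonpos_of_nonneg (by nlinarith [sq_nonneg (x - 0)])
        (by positivity))
    have h2 : σ ≤ √(2 * Real.pi * w) := by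
      apply Real.le_sqrt_of_sq_le
      rw [hw]
      nlinarith [Real.pi_gt_three, sq_nonneg σ]
    calc _ ≤ (√(2 * Real.pi * w))⁻¹ * 1 := by gcongr
      _ ≤ 1 / σ := by rw [mul_one, one_div]; gcongr
  calc ∫ x in Set.Ioc a b, gaussianPDFReal 0 w x ≤ ∫ x in Set.Ioc a b, 1 / σ :=
        setIntegral_mono (integrable_gaussianPDFReal _ _).integrableOn (by simp) hle
    _ = (b - a) / σ := by
        simp only [integral_const, smul_eq_mul]
        rw [measureReal_restrict_apply MeasurableSet.univ, Set.univ_inter,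
          Real.volume_real_Ioc_of_le hab]
        ring

/-- Gaussian anti-concentration: the collar of a wedge is covered by three slabs. -/
lemma gs_wedge_collar (v : Fin 3 → E) (hv : ∀ i, v i ≠ 0) {r : ℝ} (hr : 0 < r) (z : Fin 3 → ℝ)
    {δ : ℝ} (hδ : 0 ≤ δ) :
    (gs r).real (wedge v (fun i => z i + δ)) ≤
      (gs r).real (wedge v z) + δ / r * ∑ i, ‖v i‖⁻¹ := by
  have hsub : wedge v (fun i => z i + δ) ⊆
      wedge v z ∪ ⋃ i, {x : E | ⟪v i, x⟫ ∈ Set.Ioc (z i) (z i + δ)} := by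
    intro x hx
    by_cases h : x ∈ wedge v z
    · exact Or.inl h
    · right
      simp only [wedge, Set.mem_ofPred_eq, not_forall, not_le] at h
      obtain ⟨i, hi⟩ := h
      exact Set.mem_iUnion.2 ⟨i, hi, hx i⟩
  refine (measureReal_mono hsub).trans ((measureReal_union_le _ _).trans ?_)
  gcongr
  refine (measureReal_iUnion_fintype_le _).trans ?_
  rw [Finset.mul_sum]
  refine Finset.sum_le_sum fun i _ => ?_
  have h1 : (gs r).real {x : E | ⟪v i, x⟫ ∈ Set.Ioc (z i) (z i + δ)} =
      ((gs r).map (fun x => ⟪v i, x⟫)).real (Set.Ioc (z i) (z i + δ)) := by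
    rw [map_measureReal_apply (by fun_prop) measurableSet_Ioc]; rfl
  have hn : 0 < ‖v i‖ := norm_pos_iff.2 (hv i)
  rw [h1, inner_map_gs]
  refine (gaussianReal_Ioc_le (σ := r * ‖v i‖) (by positivity)
    (Real.coe_toNNReal _ (sq_nonneg _)) _ _ (by linarith)).trans
    (le_of_eq ?_)
  field_simp
  ring

/-- A box, in the coordinates `⟪v i, ·⟫`, carrying three quarters of the mass of `N(0, r² I)`; its
size is proportional to `r`. -/
lemma exists_gaussian_box (v : Fin 3 → E) : ∃ h : ℝ, 0 ≤ h ∧ ∀ r : ℝ, 0 ≤ r →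
    3 / 4 ≤ (gs r).real {x | ∀ i, |⟪v i, x⟫| ≤ r * h} := by
  set S : ℕ → Set E := fun n => {x | ∀ i, |⟪v i, x⟫| ≤ n} with hS
  have hmono : Monotone S := fun m n hmn x hx i => (hx i).trans (by exact_mod_cast hmn)
  have hU : ⋃ n, S n = Set.univ := by
    refine Set.eq_univ_of_forall fun x => ?_
    obtain ⟨n, hn⟩ := exists_nat_ge (∑ i, |⟪v i, x⟫|)
    refine Set.mem_iUnion.2 ⟨n, fun i => le_trans ?_ hn⟩
    exact Finset.single_le_sum (f := fun i => |⟪v i, x⟫|) (fun _ _ => abs_nonneg _)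
      (Finset.mem_univ i)
  have ht := tendsto_measure_iUnion_atTop (μ := stdGaussian E) hmono
  rw [hU, measure_univ] at ht
  have := (ht.eventually (lt_mem_nhds (show ENNReal.ofReal (3 / 4) < 1 by
    rw [ENNReal.ofReal_lt_one]; norm_num))).exists
  obtain ⟨n, hn⟩ := this
  refine ⟨n, by positivity, fun r hr => ?_⟩
  have hm : MeasurableSet {x : E | ∀ i, |⟪v i, x⟫| ≤ r * n} := by
    rw [Set.ofPred_forall]
    exact MeasurableSet.iInter fun i => measurableSet_le (by fun_prop) (by fun_prop)
  rw [gs, map_measureReal_apply (by fun_prop) hm]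
  have h1 : 3 / 4 ≤ (stdGaussian E).real (S n) :=
    (ENNReal.ofReal_le_iff_le_toReal (measure_ne_top _ _)).1 hn.le
  refine h1.trans (measureReal_mono fun x hx i => ?_)
  rw [real_inner_smul_right, abs_mul, abs_of_nonneg hr]
  exact mul_le_mul_of_nonneg_left (hx i) hr

/-! ### Berry–Esseen theorem for isotropic summands -/

lemma cube_inv_le_telescope {x : ℝ} (hx : 1 ≤ x) :
    (√x ^ 3)⁻¹ ≤ 6 * ((√x)⁻¹ - (√(x + 1))⁻¹) := by
  have ha : 1 ≤ √x := Real.one_le_sqrt.2 hx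
  have hb : 0 < √(x + 1) := Real.sqrt_pos.2 (by linarith)
  have ha2 : √x ^ 2 = x := Real.sq_sqrt (by linarith)
  have hb2 : √(x + 1) ^ 2 = x + 1 := Real.sq_sqrt (by linarith)
  set a := √x
  set b := √(x + 1)
  have hb3 : b ≤ 3 / 2 * a := by
    apply (sq_le_sq₀ (by positivity) (by positivity)).1
    nlinarith
  have e : a⁻¹ - b⁻¹ = (a * b * (a + b))⁻¹ := by
    have : (b - a) * (a + b) = 1 := by nlinarith
    field_simp
    nlinarith
  rw [e, ← div_eq_mul_inv, le_div_iff₀ (by positivity), inv_mul_le_iff₀ (by positivity)]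
  have h1 : b * (a + b) ≤ (3 / 2 * a) * (a + 3 / 2 * a) := by gcongr
  nlinarith [mul_le_mul_of_nonneg_left h1 (show 0 ≤ a by positivity), pow_pos (show 0 < a by positivity) 3]

lemma sum_cube_inv_le {K : ℝ} (hK : 1 ≤ K) (n : ℕ) :
    ∑ k ∈ Finset.range n, (√(K + k) ^ 3)⁻¹ ≤ 6 / √K := by
  have h : ∑ k ∈ Finset.range n, (√(K + k) ^ 3)⁻¹ ≤
      ∑ k ∈ Finset.range n, 6 * ((√(K + k))⁻¹ - (√(K + (k + 1 : ℕ)))⁻¹) := by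
    refine Finset.sum_le_sum fun k _ => ?_
    have := cube_inv_le_telescope (x := K + k) (by linarith [(Nat.cast_nonneg k : (0 : ℝ) ≤ k)])
    rwa [Nat.cast_succ, ← add_assoc]
  refine h.trans ?_
  rw [← Finset.mul_sum, Finset.sum_range_sub' (fun k : ℕ => (√(K + k))⁻¹)]
  have : 0 ≤ (√(K + n))⁻¹ := by positivity
  rw [div_eq_mul_inv]
  simp only [Nat.cast_zero, add_zero]
  linarith

/-- The contribution of the `k`-th Lindeberg swap: for `2 k < n` the inductive bound is used, and
for `2 k ≥ n` the accumulated Gaussian smoothing is strong enough by itself. -/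
lemma swap_term_le {K D : ℝ} (hK : 1 ≤ K) (hD : 0 ≤ D) {n k m : ℕ} (hkm : n = m + 1 + k) :
    min 1 (D / √((m : ℝ) + 1)) * (√(K + k) ^ 3)⁻¹ + (√(m + (K + k)) ^ 3)⁻¹ ≤
      2 * D / √n * (√(K + k) ^ 3)⁻¹ + 4 * (√n ^ 3)⁻¹ := by
  have hn : (n : ℝ) = m + 1 + k := by exact_mod_cast hkm
  have hm0 : (0 : ℝ) ≤ m := Nat.cast_nonneg m
  have hk0 : (0 : ℝ) ≤ k := Nat.cast_nonneg k
  have hn0 : (0 : ℝ) < n := by linarith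
  have hsn : 0 < √(n : ℝ) := Real.sqrt_pos.2 hn0
  have hr : 0 < √(K + k) := Real.sqrt_pos.2 (by linarith)
  have ht : (√(m + (K + k)) ^ 3)⁻¹ ≤ (√(n : ℝ) ^ 3)⁻¹ := by
    have : √(n : ℝ) ≤ √(m + (K + k)) := Real.sqrt_le_sqrt (by linarith)
    gcongr
  by_cases h : 2 * k < n
  · have h2 : (n : ℝ) ≤ 4 * (m + 1) := by
      have : (2 * k : ℝ) < n := by exact_mod_cast h
      linarith
    have h3 : √(n : ℝ) ≤ 2 * √((m : ℝ) + 1) := by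
      rw [show (2 : ℝ) = √(2 ^ 2) by rw [Real.sqrt_sq (by norm_num)], ← Real.sqrt_mul (by norm_num)]
      exact Real.sqrt_le_sqrt (by linarith)
    have hm1 : 0 < √((m : ℝ) + 1) := Real.sqrt_pos.2 (by linarith)
    have h4 : D / √((m : ℝ) + 1) ≤ 2 * D / √n := by
      rw [div_le_div_iff₀ hm1 hsn]
      nlinarith
    have h5 : min 1 (D / √((m : ℝ) + 1)) * (√(K + k) ^ 3)⁻¹ ≤ 2 * D / √n * (√(K + k) ^ 3)⁻¹ := by
      gcongr
      exact (min_le_right _ _).trans h4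
    have : 0 ≤ (√(n : ℝ) ^ 3)⁻¹ := by positivity
    linarith
  · have h2 : (n : ℝ) ≤ 2 * k := by exact_mod_cast not_lt.1 h
    have h3 : √(n : ℝ) ≤ 1.44 * √(K + k) := by
      apply (sq_le_sq₀ (by positivity) (by positivity)).1
      rw [Real.sq_sqrt hn0.le, mul_pow, Real.sq_sqrt (by linarith)]
      linarith
    have h4 : (√(K + k) ^ 3)⁻¹ ≤ 3 * (√(n : ℝ) ^ 3)⁻¹ := by
      rw [← div_eq_mul_inv, le_div_iff₀ (by positivity), inv_mul_le_iff₀ (by positivity)]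
      calc √(n : ℝ) ^ 3 ≤ (1.44 * √(K + k)) ^ 3 := by gcongr
        _ ≤ _ := by
          rw [mul_pow]
          have := pow_pos hr 3
          nlinarith
    have h5 : min 1 (D / √((m : ℝ) + 1)) * (√(K + k) ^ 3)⁻¹ ≤ 1 * (√(K + k) ^ 3)⁻¹ := by
      gcongr
      exact min_le_left _ _
    have : 0 ≤ 2 * D / √n * (√(K + k) ^ 3)⁻¹ := by positivity
    linarith

/-- The Lindeberg telescoping sum for the smoothed laws: the summands are replaced one at a time by
standard Gaussians, starting from the initial smoothing of variance `K`. The `n - k - 1` summands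
not yet replaced are handled by the inductive hypothesis. -/
lemma smoothed_bound {Q : Measure E} (hQ : Isotropic Q) (v : Fin 3 → E) {K D : ℝ} (hK : 1 ≤ K)
    (hD : 0 ≤ D) (n : ℕ) (hn : 0 < n)
    (ih : ∀ m < n, ∀ z, |(convPow Q m).real (wedge v z) - (gs √m).real (wedge v z)| ≤
      D / √((m : ℝ) + 1)) (z : Fin 3 → ℝ) :
    |(convPow Q n ∗ gs √K).real (wedge v z) - (gs √n ∗ gs √K).real (wedge v z)| ≤
      smoothConst * (thirdMoment Q + thirdMoment (stdGaussian E)) * (12 * D / √K + 4) / √n := by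
  have := hQ.prob
  set C := smoothConst * (thirdMoment Q + thirdMoment (stdGaussian E)) with hC
  have hC0 : 0 ≤ C := mul_nonneg smoothConst_pos.le
    (add_nonneg (thirdMoment_nonneg _) (thirdMoment_nonneg _))
  -- After `k` replacements the Gaussian part has variance `K + k`.
  set T : ℕ → ℝ := fun k => (convPow Q (n - k) ∗ gs √(K + k)).real (wedge v z) with hT
  have h0 : T 0 = (convPow Q n ∗ gs √K).real (wedge v z) := by simp [hT]
  have hlast : T n = (gs √n ∗ gs √K).real (wedge v z) := by
    simp only [hT, Nat.sub_self, convPow]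
    rw [gs_conv (c := √(K + n)), Measure.dirac_zero_conv]
    rw [Real.sq_sqrt (by positivity), Real.sq_sqrt (by linarith), Real.sq_sqrt (by positivity)]
    ring
  have hstep : ∀ k ∈ Finset.range n, |T k - T (k + 1)| ≤
      C * (2 * D / √n * (√(K + k) ^ 3)⁻¹ + 4 * (√n ^ 3)⁻¹) := by
    intro k hk
    obtain ⟨m, hm⟩ : ∃ m, n = m + 1 + k := ⟨n - k - 1, by have := Finset.mem_range.1 hk; omega⟩
    have e1 : n - k = m + 1 := by omega
    have e2 : n - (k + 1) = m := by omega
    have hk0 : (0 : ℝ) ≤ k := Nat.cast_nonneg k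
    have hl := lindeberg_step hQ v z (convPow Q m) (r := √(K + k)) (s := √m)
      (t := √(m + (K + k))) (D := min 1 (D / √((m : ℝ) + 1)))
      (Real.sqrt_pos.2 (by linarith)) (Real.sqrt_pos.2 (by positivity))
      (by rw [Real.sq_sqrt (by positivity), Real.sq_sqrt (by linarith),
            Real.sq_sqrt (by positivity)])
      (fun z => le_min (abs_real_sub_le_one _ _ _) (ih m (by omega) z))
    refine le_trans (le_of_eq ?_) (hl.trans (mul_le_mul_of_nonneg_left
      (swap_term_le hK hD hm) hC0))
    simp only [hT, e1, e2]
    congr 3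
    · rw [convPow, Measure.conv_assoc]
    · rw [← gs_one, gs_conv (c := √(K + (k + 1 : ℕ)))]
      rw [Real.sq_sqrt (by linarith), Real.sq_sqrt (by positivity)]
      push_cast; ring
  rw [← h0, ← hlast, ← Finset.sum_range_sub' T n]
  refine (Finset.abs_sum_le_sum_abs _ _).trans ((Finset.sum_le_sum hstep).trans ?_)
  rw [← Finset.mul_sum, Finset.sum_add_distrib, ← Finset.mul_sum, mul_div_assoc C]
  refine mul_le_mul_of_nonneg_left ?_ hC0
  have hs := sum_cube_inv_le hK n
  have hn0 : (0 : ℝ) < n := by exact_mod_cast hn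
  have hsn : 0 < √(n : ℝ) := Real.sqrt_pos.2 hn0
  have hsn2 : √(n : ℝ) ^ 2 = n := Real.sq_sqrt hn0.le
  calc _ ≤ 2 * D / √n * (6 / √K) + ∑ k ∈ Finset.range n, 4 * (√(n : ℝ) ^ 3)⁻¹ := by gcongr
    _ = _ := by
      rw [Finset.sum_const, Finset.card_range, nsmul_eq_mul]
      have : (n : ℝ) * (4 * (√(n : ℝ) ^ 3)⁻¹) = 4 / √n := by
        nth_rewrite 1 [← hsn2]
        field_simp
      rw [this]; ring

/-- A Berry–Esseen theorem for isotropic summands, on the class of all intersections of three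
half-spaces with fixed normals. The proof is by induction on `n`: the bound for fewer summands enters
the smoothed estimate with a factor that an initial Gaussian smoothing of large variance `K` makes
small, and this smoothing is then removed at a cost of order `√K / √n`. -/
theorem berry_esseen {Q : Measure E} (hQ : Isotropic Q) (v : Fin 3 → E) (hv : ∀ i, v i ≠ 0) :
    ∃ D : ℝ, 1 ≤ D ∧ ∀ (n : ℕ) (z : Fin 3 → ℝ),
      |(convPow Q n).real (wedge v z) - (gs √n).real (wedge v z)| ≤ D / √((n : ℝ) + 1) := by
  have := hQ.prob
  set C := smoothConst * (thirdMoment Q + thirdMoment (stdGaussian E)) with hC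
  have hC0 : 0 ≤ C := mul_nonneg smoothConst_pos.le
    (add_nonneg (thirdMoment_nonneg _) (thirdMoment_nonneg _))
  obtain ⟨h, hh0, hbox⟩ := exists_gaussian_box v
  set σ := ∑ i, ‖v i‖⁻¹ with hσ
  have hσ0 : 0 ≤ σ := Finset.sum_nonneg fun i _ => by positivity
  -- With this `K` the inductive bound `D` enters with a factor `24 * C / √K ≤ 1 / 4`.
  set K : ℝ := 1 + (96 * C) ^ 2 with hKdef
  have hK : 1 ≤ K := by rw [hKdef]; nlinarith [sq_nonneg (96 * C)]
  have hsK : 96 * C ≤ √K := Real.le_sqrt_of_sq_le (by rw [hKdef]; linarith)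
  have hsK0 : 0 < √K := Real.sqrt_pos.2 (by linarith)
  set D : ℝ := 1 + 4 * (8 * C + 3 * √K * h * σ) with hDdef
  have hD1 : 1 ≤ D := by
    have : 0 ≤ 8 * C + 3 * √K * h * σ := by positivity
    linarith
  refine ⟨D, hD1, fun n => ?_⟩
  induction n using Nat.strong_induction_on with
  | _ n ih =>
    intro z
    rcases Nat.eq_zero_or_pos n with rfl | hn
    · refine (abs_real_sub_le_one _ _ _).trans ?_
      simpa using hD1
    have hn0 : (1 : ℝ) ≤ n := by exact_mod_cast hn
    have hsn : 0 < √(n : ℝ) := Real.sqrt_pos.2 (by linarith)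
    have hsm := smoothed_bound hQ v hK (by linarith) n hn ih
    have hd := desmooth v (convPow Q n) (gs √n) (h := √K * h) hsm
      (fun z => gs_wedge_collar v hv hsn z (by positivity)) (hbox _ hsK0.le) z
    refine hd.trans ?_
    have h2 : √((n : ℝ) + 1) ≤ 2 * √n := by
      apply (sq_le_sq₀ (by positivity) (by positivity)).1
      rw [Real.sq_sqrt (by linarith), mul_pow, Real.sq_sqrt (by linarith)]
      linarith
    have h3 : D / (2 * √n) ≤ D / √((n : ℝ) + 1) := by gcongr
    refine le_trans ?_ h3
    have h4 : C * (24 * D / √K) ≤ D / 4 := by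
      rw [mul_div_assoc', div_le_iff₀ hsK0]
      nlinarith
    have e : 3 / 2 * (4 / 3 * (C * (12 * D / √K + 4) / √n) + 2 * (√K * h) / √n * σ) =
        (C * (24 * D / √K) + (8 * C + 3 * √K * h * σ)) / √n := by
      field_simp; ring
    rw [← hC, e, div_mul_eq_div_div]
    gcongr
    linarith

/-! ### Growth of Gaussian wedge probabilities -/

/-- The signed excess of `x` over the wedge: `x ∈ wedge v (z + t)` iff `excess v z x ≤ t`. -/
noncomputable def excess (v : Fin 3 → E) (z : Fin 3 → ℝ) (x : E) : ℝ :=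
  Finset.univ.sup' Finset.univ_nonempty fun i => ⟪v i, x⟫ - z i

lemma excess_le_iff (v : Fin 3 → E) (z : Fin 3 → ℝ) (x : E) (t : ℝ) :
    excess v z x ≤ t ↔ x ∈ wedge v (fun i => z i + t) := by
  simp only [excess, Finset.sup'_le_iff, Finset.mem_univ, true_imp_iff, wedge, Set.mem_ofPred_eq,
    sub_le_iff_le_add, add_comm]

lemma excess_le_add (v : Fin 3 → E) (z : Fin 3 → ℝ) (x y : E) :
    excess v z x ≤ excess v z y + (1 + ∑ i, ‖v i‖) * ‖x - y‖ := by
  refine Finset.sup'_le _ _ fun i _ => ?_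
  have h1 : ⟪v i, y⟫ - z i ≤ excess v z y :=
    Finset.le_sup' (fun i => ⟪v i, y⟫ - z i) (Finset.mem_univ i)
  have h2 : ⟪v i, x - y⟫ ≤ ‖v i‖ * ‖x - y‖ := real_inner_le_norm _ _
  have h3 : ‖v i‖ ≤ 1 + ∑ i, ‖v i‖ := by
    have := Finset.single_le_sum (f := fun i => ‖v i‖) (fun _ _ => norm_nonneg _)
      (Finset.mem_univ i)
    linarith
  have h4 := mul_le_mul_of_nonneg_right h3 (norm_nonneg (x - y))
  rw [inner_sub_right] at h2
  linarith

/-- The rotation path from `x` to `y`. -/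
noncomputable def rot (θ : ℝ) (p : E × E) : E := Real.cos θ • p.1 + Real.sin θ • p.2

lemma norm_rot_sub_le (θ φ : ℝ) (p : E × E) {R : ℝ} (h1 : ‖p.1‖ ≤ R) (h2 : ‖p.2‖ ≤ R) :
    ‖rot θ p - rot φ p‖ ≤ 2 * R * |θ - φ| := by
  have e : rot θ p - rot φ p =
      (Real.cos θ - Real.cos φ) • p.1 + (Real.sin θ - Real.sin φ) • p.2 := by
    simp only [rot, sub_smul]; abel
  rw [e]
  refine (norm_add_le _ _).trans ?_
  rw [norm_smul, norm_smul, Real.norm_eq_abs, Real.norm_eq_abs]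
  have a1 := mul_le_mul (Real.abs_cos_sub_cos_le θ φ) h1 (norm_nonneg _) (abs_nonneg _)
  have a2 := mul_le_mul (Real.abs_sin_sub_sin_le θ φ) h2 (norm_nonneg _) (abs_nonneg _)
  linarith

/-- A rotation path from inside the wedge to outside its `δ`-collar spends a time at least
proportional to `δ` in the collar. -/
lemma time_in_collar (v : Fin 3 → E) (z : Fin 3 → ℝ) {δ R : ℝ} (p : E × E)
    (h1 : ‖p.1‖ ≤ R) (h2 : ‖p.2‖ ≤ R) (hx : p.1 ∈ wedge v z)
    (hy : p.2 ∉ wedge v (fun i => z i + δ)) :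
    ENNReal.ofReal δ ≤ ENNReal.ofReal ((1 + ∑ i, ‖v i‖) * (2 * R)) *
      volume (Set.Icc 0 (Real.pi / 2) ∩
        {θ | rot θ p ∈ wedge v (fun i => z i + δ) \ wedge v z}) := by
  set L := 1 + ∑ i, ‖v i‖ with hL
  have hL0 : 0 ≤ L := by positivity
  have hR : 0 ≤ R := (norm_nonneg _).trans h1
  set h : ℝ → ℝ := fun θ => excess v z (rot θ p) with hh
  have hlip : LipschitzWith (Real.toNNReal (L * (2 * R))) h := by
    refine LipschitzWith.of_le_add_mul _ fun θ φ => ?_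
    refine (excess_le_add v z _ (rot φ p)).trans ?_
    rw [Real.coe_toNNReal _ (by positivity), Real.dist_eq, mul_assoc]
    have := norm_rot_sub_le θ φ p h1 h2
    gcongr
  have h00 : h 0 ≤ 0 := by
    rw [hh, excess_le_iff]
    simpa [rot] using hx
  have h01 : δ < h (Real.pi / 2) := by
    rw [← not_le, hh, excess_le_iff]
    simpa [rot] using hy
  set S := Set.Icc 0 (Real.pi / 2) ∩ {θ | rot θ p ∈ wedge v (fun i => z i + δ) \ wedge v z}
  -- The path takes every value of the excess in `(0, δ]` inside the collar, and a Lipschitz map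
  -- expands lengths at most by its Lipschitz constant.
  have himg : Set.Ioc 0 δ ⊆ h '' S := by
    intro t ht
    obtain ⟨θ, hθ, rfl⟩ := intermediate_value_Icc (by positivity) hlip.continuous.continuousOn
      (⟨h00.trans ht.1.le, ht.2.trans h01.le⟩ : t ∈ Set.Icc (h 0) (h (Real.pi / 2)))
    refine ⟨θ, ⟨hθ, (excess_le_iff _ _ _ _).1 ht.2, fun hc => ?_⟩, rfl⟩
    have : h θ ≤ 0 := (excess_le_iff _ _ _ _).2 (by simpa using hc)
    exact absurd ht.1 (not_lt.2 this)
  have hv := (hlip.lipschitzOnWith (s := S)).hausdorffMeasure_image_le (d := 1) zero_le_one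
  rw [hausdorffMeasure_real, ENNReal.rpow_one] at hv
  calc ENNReal.ofReal δ = volume (Set.Ioc 0 δ) := by rw [Real.volume_Ioc, sub_zero]
    _ ≤ volume (h '' S) := measure_mono himg
    _ ≤ _ := hv

lemma exists_ball_mass (κ : ℝ) (hκ : 0 < κ) : ∃ R : ℝ, 0 < R ∧
    (stdGaussian E).real (Metric.closedBall 0 R)ᶜ ≤ κ := by
  have hmono : Monotone fun n : ℕ => Metric.closedBall (0 : E) n := fun m n hmn =>
    Metric.closedBall_subset_closedBall (by exact_mod_cast hmn)
  have ht := tendsto_measure_iUnion_atTop (μ := stdGaussian E) hmono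
  rw [Metric.iUnion_closedBall_nat, measure_univ] at ht
  have ht2 := (ENNReal.tendsto_toReal ENNReal.one_ne_top).comp ht
  have := (ht2.eventually (lt_mem_nhds (show 1 - κ < (1 : ENNReal).toReal by simp [hκ])))
  obtain ⟨n, hn, hn1⟩ := (this.and (Filter.eventually_ge_atTop 1)).exists
  refine ⟨n, by exact_mod_cast hn1, ?_⟩
  rw [probReal_compl_eq_one_sub measurableSet_closedBall]
  have : 1 - κ < (stdGaussian E).real (Metric.closedBall 0 n) := hn
  linarith

/-- Growth of the Gaussian mass of wedges: as long as both a wedge and the complement of the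
widened wedge carry mass at least `κ`, widening the wedge by `δ` adds mass at least `c δ`. This holds by
rotating one Gaussian vector into an independent copy: every intermediate vector is again standard
Gaussian, and the path has to cross the collar at bounded speed. -/
theorem wedge_growth (v : Fin 3 → E) {κ : ℝ} (hκ : 0 < κ) : ∃ c : ℝ, 0 < c ∧
    ∀ (z : Fin 3 → ℝ) (δ : ℝ), 0 ≤ δ → κ ≤ (stdGaussian E).real (wedge v z) →
      (stdGaussian E).real (wedge v (fun i => z i + δ)) ≤ 1 - κ →
      (stdGaussian E).real (wedge v z) + c * δ ≤
        (stdGaussian E).real (wedge v (fun i => z i + δ)) := by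
  obtain ⟨R, hR0, hR⟩ := exists_ball_mass (κ / 2) (by positivity)
  set γ := stdGaussian E with hγ
  set L := (1 + ∑ i, ‖v i‖) * (2 * R) with hL
  have hL0 : 0 < L := by positivity
  refine ⟨κ ^ 2 / 4 / (L * (Real.pi / 2)), by positivity, fun z δ hδ h1 h2 => ?_⟩
  set K := wedge v z
  set K' := wedge v (fun i => z i + δ)
  set B := Metric.closedBall (0 : E) R
  have hKm : MeasurableSet K := measurableSet_wedge _ _
  have hKm' : MeasurableSet K' := measurableSet_wedge _ _
  have hsub : K ⊆ K' := wedge_mono v fun i => by linarith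
  have hG : ∀ S : Set E, κ ≤ γ.real S → κ / 2 ≤ γ.real (S ∩ B) := by
    intro S hS
    have : γ.real S ≤ γ.real (S ∩ B) + γ.real Bᶜ :=
      (measureReal_mono fun x hx => by by_cases hb : x ∈ B <;> simp [hx, hb]).trans
        (measureReal_union_le _ _)
    linarith
  have hG1 := hG K h1
  have hG2 := hG K'ᶜ (by rw [probReal_compl_eq_one_sub hKm']; linarith)
  -- The expected time spent in the collar is computed once by integrating over the pair of
  -- endpoints first, and bounded below by integrating over the time first.
  set S : Set ((E × E) × ℝ) := {q | rot q.2 q.1 ∈ K' \ K} with hS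
  have hSm : MeasurableSet S := by
    have : Measurable fun q : (E × E) × ℝ => rot q.2 q.1 := by unfold rot; fun_prop
    exact (hKm'.diff hKm).preimage this
  set τ := (volume : Measure ℝ).restrict (Set.Icc 0 (Real.pi / 2)) with hτ
  have hupper : ((γ.prod γ).prod τ) S = γ (K' \ K) * ENNReal.ofReal (Real.pi / 2) := by
    rw [Measure.prod_apply_symm hSm]
    have : ∀ θ, (γ.prod γ) ((fun p => (p, θ)) ⁻¹' S) = γ (K' \ K) := by
      intro θ
      conv_rhs => rw [hγ, ← map_rotation θ, Measure.map_apply (by fun_prop) (hKm'.diff hKm)]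
      rfl
    simp_rw [this]
    rw [lintegral_const, hτ, Measure.restrict_apply MeasurableSet.univ, Set.univ_inter,
      Real.volume_Icc, sub_zero]
  have hlower : ENNReal.ofReal δ * (γ (K ∩ B) * γ (K'ᶜ ∩ B)) ≤
      ENNReal.ofReal L * ((γ.prod γ).prod τ) S := by
    rw [Measure.prod_apply hSm, ← Measure.prod_prod, ← setLIntegral_const,
      ← lintegral_const_mul _ (measurable_measure_prodMk_left hSm)]
    refine (setLIntegral_mono' ((hKm.inter measurableSet_closedBall).prod
      (hKm'.compl.inter measurableSet_closedBall)) fun p hp => ?_).trans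
      (setLIntegral_le_lintegral _ _)
    have := time_in_collar v z p (mem_closedBall_zero_iff.1 hp.1.2)
      (mem_closedBall_zero_iff.1 hp.2.2) hp.1.1 hp.2.1
    refine this.trans (le_of_eq ?_)
    rw [hτ, Measure.restrict_apply (measurable_prodMk_left hSm), Set.inter_comm]
    rfl
  rw [hupper] at hlower
  have hreal := ENNReal.toReal_mono (by finiteness) hlower
  simp only [ENNReal.toReal_mul, ENNReal.toReal_ofReal hδ, ENNReal.toReal_ofReal hL0.le,
    ENNReal.toReal_ofReal (show 0 ≤ Real.pi / 2 by positivity)] at hreal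
  change δ * (γ.real (K ∩ B) * γ.real (K'ᶜ ∩ B)) ≤ L * (γ.real (K' \ K) * (Real.pi / 2)) at hreal
  rw [measureReal_sdiff hsub hKm] at hreal
  have h3 : δ * (κ / 2 * (κ / 2)) ≤ δ * (γ.real (K ∩ B) * γ.real (K'ᶜ ∩ B)) := by gcongr
  have h4 : κ ^ 2 / 4 / (L * (Real.pi / 2)) * δ ≤ γ.real K' - γ.real K := by
    rw [div_mul_eq_mul_div, div_le_iff₀ (by positivity)]
    nlinarith
  linarith

/-! ### Reduction of a general covariance matrix to the isotropic case -/

/-- A symmetric projection `p` that is a left multiple of `A` and does not change `A`: the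
projection onto the orthogonal complement of `ker A`, with `B` a pseudo-inverse. -/
lemma exists_pinv (A : Matrix (Fin 3) (Fin 3) ℝ) : ∃ B p : Matrix (Fin 3) (Fin 3) ℝ,
    p.transpose = p ∧ p * p = p ∧ B * A = p ∧ A * p = A := by
  have hH : (A.transpose * A).IsHermitian := by
    have := Matrix.isHermitian_conjTranspose_mul_self A
    rwa [Matrix.conjTranspose_eq_transpose_of_trivial] at this
  set O : Matrix (Fin 3) (Fin 3) ℝ := hH.eigenvectorUnitary.1 with hO
  set d := hH.eigenvalues with hd
  have hsp : A.transpose * A = O * Matrix.diagonal d * O.transpose := by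
    have := hH.spectral_theorem
    rw [Unitary.conjStarAlgAut_apply] at this
    exact this
  have hOO : O.transpose * O = 1 := by
    have := Unitary.coe_star_mul_self hH.eigenvectorUnitary
    exact this
  -- The convention `0⁻¹ = 0` makes `e` the pseudo-inverse of the eigenvalues, and `q` the indicator
  -- of the nonzero ones.
  set e : Fin 3 → ℝ := fun i => (d i)⁻¹
  set q : Fin 3 → ℝ := fun i => e i * d i with hq
  have hqq : ∀ i, q i * q i = q i := by
    intro i
    by_cases h : d i = 0 <;> simp [hq, e, h]
  have hdq : ∀ i, d i * q i = d i := by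
    intro i
    by_cases h : d i = 0 <;> simp [hq, e, h]
  have hmul : ∀ a b : Fin 3 → ℝ, O * Matrix.diagonal a * O.transpose *
      (O * Matrix.diagonal b * O.transpose) =
      O * Matrix.diagonal (fun i => a i * b i) * O.transpose := by
    intro a b
    calc _ = O * Matrix.diagonal a * (O.transpose * O) * Matrix.diagonal b * O.transpose := by
          simp only [Matrix.mul_assoc]
      _ = _ := by
          rw [hOO, Matrix.mul_one, Matrix.mul_assoc O, Matrix.diagonal_mul_diagonal]
  set p := O * Matrix.diagonal q * O.transpose with hp
  have hpT : p.transpose = p := by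
    simp [hp, Matrix.transpose_mul, Matrix.mul_assoc]
  have hAp : A.transpose * A * p = A.transpose * A := by
    rw [hsp, hp, hmul]; simp_rw [hdq]
  refine ⟨O * Matrix.diagonal e * O.transpose * A.transpose, p, hpT, ?_, ?_, ?_⟩
  · rw [hp, hmul]; simp_rw [hqq]
  · rw [Matrix.mul_assoc, hsp, hmul]
  · have h0 : (A * p - A).conjTranspose * (A * p - A) = 0 := by
      rw [Matrix.conjTranspose_eq_transpose_of_trivial, Matrix.transpose_sub,
        Matrix.transpose_mul, hpT, Matrix.sub_mul, Matrix.mul_sub, Matrix.mul_sub,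
        Matrix.mul_assoc p, ← Matrix.mul_assoc A.transpose A p, hAp, Matrix.mul_assoc p]
      abel
    exact sub_eq_zero.1 (Matrix.conjTranspose_mul_self_eq_zero.1 h0)

/-- A centered probability law on `ℝ³` with finite third moments and covariance matrix `C`. -/
structure Centered (Q : Measure E) (C : Matrix (Fin 3) (Fin 3) ℝ) : Prop where
  prob : IsProbabilityMeasure Q
  third : Integrable (fun y => ‖y‖ ^ 3) Q
  mean : ∀ i, ∫ y, y i ∂Q = 0
  cov : ∀ i j, ∫ y, y i * y j ∂Q = C i j

lemma Centered.isotropic {Q : Measure E} (hQ : Centered Q 1) : Isotropic Q where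
  prob := hQ.prob
  third := hQ.third
  mean := hQ.mean
  cov i j := by rw [hQ.cov, Matrix.one_apply]

lemma Isotropic.centered {Q : Measure E} (hQ : Isotropic Q) : Centered Q 1 where
  prob := hQ.prob
  third := hQ.third
  mean := hQ.mean
  cov i j := by rw [hQ.cov, Matrix.one_apply]

section
variable {Q R : Measure E} {C C' : Matrix (Fin 3) (Fin 3) ℝ}

lemma Centered.integrable_of_le (hQ : Centered Q C) {f : E → ℝ}
    (hf : Measurable f) (c : ℝ) (h : ∀ y, |f y| ≤ c * (1 + ‖y‖ ^ 3)) : Integrable f Q := by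
  have := hQ.prob
  exact (((integrable_const 1).add hQ.third).const_mul c).mono' hf.aestronglyMeasurable
    (by filter_upwards with y; exact h y)

lemma Centered.integrable_eval (hQ : Centered Q C) (i : Fin 3) :
    Integrable (fun y : E => y i) Q :=
  hQ.integrable_of_le (by fun_prop) 1 fun y => by
    have h1 := abs_apply_le_norm y i
    have h2 := norm_nonneg y
    nlinarith [mul_nonneg h2 (sq_nonneg (‖y‖ - 1)), sq_nonneg (‖y‖ - 1)]

lemma Centered.integrable_mul (hQ : Centered Q C) (i j : Fin 3) :
    Integrable (fun y : E => y i * y j) Q :=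
  hQ.integrable_of_le (by fun_prop) 1 fun y => by
    have h1 := mul_le_mul (abs_apply_le_norm y i) (abs_apply_le_norm y j) (abs_nonneg _)
      (norm_nonneg y)
    have h2 := norm_nonneg y
    rw [abs_mul]
    nlinarith [mul_nonneg h2 (sq_nonneg (‖y‖ - 1)), sq_nonneg (‖y‖ - 1)]

/-- The linear map of `ℝ³` with matrix `B`. -/
noncomputable abbrev lin (B : Matrix (Fin 3) (Fin 3) ℝ) : E →L[ℝ] E :=
  Matrix.toEuclideanCLM (n := Fin 3) (𝕜 := ℝ) B

lemma lin_apply (B : Matrix (Fin 3) (Fin 3) ℝ) (y : E) (i : Fin 3) :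
    lin B y i = ∑ k, B i k * y k := by
  rw [lin, Matrix.ofLp_toEuclideanCLM]; rfl

lemma Centered.map (hQ : Centered Q C) (B : Matrix (Fin 3) (Fin 3) ℝ) :
    Centered (Q.map (lin B)) (B * C * B.transpose) where
  prob := have := hQ.prob; Measure.isProbabilityMeasure_map (by fun_prop)
  third := by
    rw [integrable_map_measure (by fun_prop) (by fun_prop)]
    refine hQ.integrable_of_le (by fun_prop) (‖lin B‖ ^ 3) fun y => ?_
    have h1 := (lin B).le_opNorm y
    simp only [Function.comp_apply]
    rw [abs_of_nonneg (by positivity)]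
    calc ‖lin B y‖ ^ 3 ≤ (‖lin B‖ * ‖y‖) ^ 3 := by gcongr
      _ ≤ _ := by
        rw [mul_pow]; gcongr; linarith
  mean i := by
    rw [integral_map (by fun_prop) (by fun_prop)]
    simp_rw [lin_apply]
    rw [integral_finsetSum _ fun k _ => (hQ.integrable_eval k).const_mul _]
    simp [integral_const_mul, hQ.mean]
  cov i j := by
    rw [integral_map (by fun_prop) (by fun_prop)]
    simp_rw [lin_apply, Finset.sum_mul_sum]
    have hi : ∀ k l, Integrable (fun y : E => B i k * y k * (B j l * y l)) Q := fun k l => by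
      have := (hQ.integrable_mul k l).const_mul (B i k * B j l)
      refine this.congr (Filter.Eventually.of_forall fun y => ?_)
      simp only; ring
    have e : ∀ k l, ∫ y : E, B i k * y k * (B j l * y l) ∂Q = B i k * C k l * B j l := by
      intro k l
      rw [← hQ.cov k l, mul_assoc, mul_comm _ (B j l), ← mul_assoc, ← integral_const_mul]
      congr 1; ext y; ring
    rw [integral_finsetSum _ fun k _ => integrable_finsetSum _ fun l _ => hi k l]
    simp_rw [integral_finsetSum _ fun l _ => hi _ l, e, Matrix.mul_apply, Matrix.transpose_apply,
      Finset.sum_mul]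
    exact Finset.sum_comm

lemma Centered.conv (hQ : Centered Q C) (hR : Centered R C') :
    Centered (Q ∗ R) (C + C') := by
  have := hQ.prob
  have := hR.prob
  refine ⟨inferInstance, ?_, fun i => ?_, fun i j => ?_⟩
  · rw [Measure.conv, integrable_map_measure (by fun_prop) (by fun_prop)]
    refine ((hQ.third.comp_fst R).add (hR.third.comp_snd Q)).const_mul 4 |>.mono' (by fun_prop) ?_
    filter_upwards with p
    simp only [Function.comp_apply, Pi.add_apply]
    rw [Real.norm_of_nonneg (by positivity)]
    have h1 := norm_add_le p.1 p.2
    have h2 := norm_nonneg p.1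
    have h3 := norm_nonneg p.2
    calc ‖p.1 + p.2‖ ^ 3 ≤ (‖p.1‖ + ‖p.2‖) ^ 3 := by gcongr
      _ ≤ _ := by nlinarith [mul_nonneg (add_nonneg h2 h3) (sq_nonneg (‖p.1‖ - ‖p.2‖))]
  · rw [Measure.conv, integral_map (by fun_prop) (by fun_prop)]
    simp only [PiLp.add_apply]
    rw [integral_add ((hQ.integrable_eval i).comp_fst R) ((hR.integrable_eval i).comp_snd Q),
      integral_fun_fst (f := fun y : E => y i), integral_fun_snd (f := fun y : E => y i), hQ.mean,
      hR.mean]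
    simp
  · rw [Measure.conv, integral_map (by fun_prop) (by fun_prop)]
    have e : ∀ p : E × E, (p.1 + p.2) i * (p.1 + p.2) j =
        (p.1 i * p.1 j + p.2 i * p.2 j) + (p.1 i * p.2 j + p.1 j * p.2 i) := by
      intro p; simp only [PiLp.add_apply]; ring
    simp_rw [e]
    have i1 := (hQ.integrable_mul i j).comp_fst R
    have i2 := (hR.integrable_mul i j).comp_snd Q
    have i3 := (hQ.integrable_eval i).mul_prod (hR.integrable_eval j)
    have i4 := (hQ.integrable_eval j).mul_prod (hR.integrable_eval i)
    refine (integral_add (i1.add i2) (i3.add i4)).trans ?_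
    simp only [Pi.add_apply]
    rw [integral_add i1 i2, integral_add i3 i4,
      integral_prod_mul (fun y : E => y i) (fun y : E => y j),
      integral_prod_mul (fun y : E => y j) (fun y : E => y i),
      integral_fun_fst (f := fun y : E => y i * y j),
      integral_fun_snd (f := fun y : E => y i * y j), hQ.mean, hQ.mean, hQ.cov, hR.cov]
    simp

/-- If the image of a centered law under `M` has zero covariance matrix, then the law is carried by
`ker M`. -/
lemma Centered.ae_lin_eq_zero (hQ : Centered Q C) (M : Matrix (Fin 3) (Fin 3) ℝ)
    (hM : M * C * M.transpose = 0) : ∀ᵐ y ∂Q, lin M y = 0 := by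
  have h := (hQ.map M)
  rw [hM] at h
  have key : ∀ i, ∀ᵐ y ∂(Q.map (lin M)), y i = 0 := by
    intro i
    have h0 := h.cov i i
    rw [Matrix.zero_apply, integral_eq_zero_iff_of_nonneg (fun y => mul_self_nonneg _)
      (h.integrable_mul i i)] at h0
    filter_upwards [h0] with y hy
    exact mul_self_eq_zero.1 hy
  have := ae_of_ae_map (by fun_prop) (ae_all_iff.2 key)
  filter_upwards [this] with y hy
  ext i
  exact hy i

end

/-- Every centered law with covariance `A Aᵀ` is the image under `A` of an isotropic law. The
directions killed by `A` are filled in with independent Gaussian noise. -/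
lemma exists_isotropic {ρ : Measure E} {A : Matrix (Fin 3) (Fin 3) ℝ}
    (hρ : Centered ρ (A * A.transpose)) :
    ∃ Q : Measure E, Isotropic Q ∧ Q.map (lin A) = ρ := by
  have := hρ.prob
  obtain ⟨B, p, hpT, hpp, hBA, hAp⟩ := exists_pinv A
  refine ⟨ρ.map (lin B) ∗ (stdGaussian E).map (lin (1 - p)), ?_, ?_⟩
  · have h := (hρ.map B).conv (isotropic_stdGaussian.centered.map (1 - p))
    have e : B * (A * A.transpose) * B.transpose +
        (1 - p) * 1 * (1 - p).transpose = 1 := by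
      have e1 : B * (A * A.transpose) * B.transpose = p := by
        calc _ = (B * A) * (B * A).transpose := by
              rw [Matrix.transpose_mul]; simp only [Matrix.mul_assoc]
          _ = p := by rw [hBA, hpT, hpp]
      rw [e1, Matrix.mul_one, Matrix.transpose_sub, hpT, Matrix.transpose_one, Matrix.sub_mul,
        Matrix.mul_sub, Matrix.mul_sub, hpp]
      simp
    rw [e] at h
    exact h.isotropic
  · have hA0 : A * (1 - p) = 0 := by rw [Matrix.mul_sub, hAp, Matrix.mul_one, sub_self]
    have hker : (A * B - 1) * (A * A.transpose) * (A * B - 1).transpose = 0 := by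
      have : (A * B - 1) * A = 0 := by
        rw [Matrix.sub_mul, Matrix.mul_assoc, hBA, hAp, Matrix.one_mul, sub_self]
      rw [← Matrix.mul_assoc, this, Matrix.zero_mul, Matrix.zero_mul]
    have hae := hρ.ae_lin_eq_zero _ hker
    rw [Measure.map_conv_continuousLinearMap, Measure.map_map (by fun_prop) (by fun_prop),
      Measure.map_map (by fun_prop) (by fun_prop)]
    have h1 : ρ.map (lin A ∘ lin B) = ρ := by
      conv_rhs => rw [← Measure.map_id (μ := ρ)]
      refine Measure.map_congr ?_
      filter_upwards [hae] with y hy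
      have : lin (A * B - 1) y = lin A (lin B y) - y := by
        simp only [lin, map_sub, map_mul, map_one]; rfl
      rw [this, sub_eq_zero] at hy
      exact hy
    have h2 : (stdGaussian E).map (lin A ∘ lin (1 - p)) = Measure.dirac 0 := by
      have : (lin A ∘ lin (1 - p) : E → E) = fun _ => 0 := by
        funext y
        have : lin A (lin (1 - p) y) = lin (A * (1 - p)) y := by
          simp only [lin, map_mul]; rfl
        rw [Function.comp_apply, this, hA0]; simp
      rw [this, Measure.map_const, measure_univ, one_smul]
    rw [h1, h2, Measure.conv_dirac_zero]

/-! ### Gaussian lower bound for orthants -/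

/-- The lower orthant with corner `z`. -/
def orthant (z : Fin 3 → ℝ) : Set E := {x | ∀ i, x i ≤ z i}

lemma measurableSet_orthant (z : Fin 3 → ℝ) : MeasurableSet (orthant z) := by
  unfold orthant
  rw [Set.ofPred_forall]
  exact MeasurableSet.iInter fun i => measurableSet_le (by fun_prop) (by fun_prop)

/-- The rows of a matrix, as vectors of the Euclidean space. -/
noncomputable def rows (A : Matrix (Fin 3) (Fin 3) ℝ) (i : Fin 3) : E := WithLp.toLp 2 (A i)

lemma inner_rows (A : Matrix (Fin 3) (Fin 3) ℝ) (i : Fin 3) (x : E) : ⟪rows A i, x⟫ = lin A x i := by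
  rw [lin_apply, PiLp.inner_apply]
  simp [rows, mul_comm]

lemma lin_preimage_orthant (A : Matrix (Fin 3) (Fin 3) ℝ) (z : Fin 3 → ℝ) :
    lin A ⁻¹' orthant z = wedge (rows A) z := by
  ext x
  simp only [Set.mem_preimage, orthant, wedge, Set.mem_ofPred_eq, inner_rows]

lemma stdGaussianCdf_eq (A : Matrix (Fin 3) (Fin 3) ℝ) (z : Fin 3 → ℝ) :
    stdGaussianCdf A z = (stdGaussian E).real (wedge (rows A) z) := by
  have hm : MeasurableSet {y : Fin 3 → ℝ | ∀ i, y i ≤ z i} := by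
    rw [Set.ofPred_forall]
    exact MeasurableSet.iInter fun i => measurableSet_le (by fun_prop) (by fun_prop)
  have hmul : Measurable fun w : Fin 3 → ℝ => A.mulVec w := by
    unfold Matrix.mulVec dotProduct; fun_prop
  rw [stdGaussianCdf, stdGaussian_eq_map, Measure.real, Measure.map_apply hmul hm,
    Measure.map_apply (by fun_prop) (measurableSet_wedge _ _), ← lin_preimage_orthant]
  rfl

lemma convPow_map (Q : Measure E) [IsProbabilityMeasure Q] (L : E →L[ℝ] E) (n : ℕ) :
    convPow (Q.map L) n = (convPow Q n).map L := by
  induction n with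
  | zero => rw [convPow, convPow, Measure.map_dirac' (by fun_prop), map_zero]
  | succ n ih =>
    rw [convPow, convPow, ih, Measure.map_conv_continuousLinearMap]

lemma rows_ne_zero {A : Matrix (Fin 3) (Fin 3) ℝ} {i : Fin 3}
    (h : 0 < (A * A.transpose) i i) : rows A i ≠ 0 := by
  intro h0
  have : ∀ k, A i k = 0 := fun k => by
    have := congrArg (fun x : E => x k) h0
    simpa [rows] using this
  simp [Matrix.mul_apply, this] at h

lemma gs_wedge_scale (v : Fin 3 → E) (z : Fin 3 → ℝ) {r : ℝ} (hr : 0 < r) :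
    (gs r).real (wedge v z) = (stdGaussian E).real (wedge v (fun i => z i / r)) := by
  rw [gs, map_measureReal_apply (by fun_prop) (measurableSet_wedge _ _)]
  congr 1
  ext x
  simp only [Set.mem_preimage, wedge, Set.mem_ofPred_eq, real_inner_smul_right, le_div_iff₀ hr,
    mul_comm]

/-- Berry–Esseen for orthants, with a possibly singular covariance matrix `A Aᵀ`. -/
theorem cdf_approx {ρ : Measure E} {A : Matrix (Fin 3) (Fin 3) ℝ}
    (hρ : Centered ρ (A * A.transpose)) (hd : ∀ i, 0 < (A * A.transpose) i i) :
    ∃ D : ℝ, 1 ≤ D ∧ ∀ (n : ℕ) (z : Fin 3 → ℝ), 0 < n →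
      (convPow ρ n).real (orthant z) ≤ stdGaussianCdf A (fun i => z i / √n) + D / √n := by
  obtain ⟨Q, hQ, rfl⟩ := exists_isotropic hρ
  have := hQ.prob
  obtain ⟨D, hD1, hD⟩ := berry_esseen hQ (rows A) fun i => rows_ne_zero (hd i)
  refine ⟨D, hD1, fun n z hn => ?_⟩
  have hsn : 0 < √(n : ℝ) := Real.sqrt_pos.2 (by exact_mod_cast hn)
  rw [convPow_map, map_measureReal_apply (by fun_prop) (measurableSet_orthant z),
    lin_preimage_orthant, stdGaussianCdf_eq, ← gs_wedge_scale _ _ hsn]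
  have h1 := (abs_le.1 (hD n z)).2
  have h2 : D / √((n : ℝ) + 1) ≤ D / √n := by
    have := Real.sqrt_le_sqrt (show (n : ℝ) ≤ n + 1 by linarith)
    gcongr
  linarith

/-- An approximate lower bound on orthant probabilities of normalized sums gives an exact lower
bound on the Gaussian probability of an orthant whose corner is moved by `O(1 / √n)`. -/
theorem cdf_lower_bound {ρ : Measure E} {A : Matrix (Fin 3) (Fin 3) ℝ}
    (hρ : Centered ρ (A * A.transpose)) (hd : ∀ i, 0 < (A * A.transpose) i i)
    {ε : ℝ} (hε : ε ∈ Set.Ioo (0 : ℝ) 1) :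
    ∃ C' : ℝ, 0 ≤ C' ∧ ∃ n₀ : ℕ, 0 < n₀ ∧ ∀ n : ℕ, n₀ ≤ n → ∀ z : Fin 3 → ℝ,
      1 - ε ≤ (convPow ρ n).real (orthant z) + 3 / √n →
      1 - ε ≤ stdGaussianCdf A (fun i => z i / √n + C' / √n) := by
  obtain ⟨D, hD1, hD⟩ := cdf_approx hρ hd
  obtain ⟨hε0, hε1⟩ := hε
  -- The mass at the corner is at least about `1 - ε`, hence at least `(1 - ε) / 2`; a failure of the
  -- conclusion leaves mass `ε` outside the widened wedge.
  set κ := min ((1 - ε) / 2) ε with hκ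
  have hκ0 : 0 < κ := lt_min (by linarith) hε0
  obtain ⟨c, hc, hgrow⟩ := wedge_growth (rows A) hκ0
  obtain ⟨n₀, hn₀⟩ := exists_nat_ge ((2 * (D + 3) / (1 - ε)) ^ 2)
  refine ⟨(D + 3) / c, by positivity, n₀ + 1, by omega, fun n hn z hz => ?_⟩
  have hn0 : 0 < n := by omega
  have hsn : 0 < √(n : ℝ) := Real.sqrt_pos.2 (by exact_mod_cast hn0)
  have hbig : 2 * (D + 3) / (1 - ε) ≤ √n := by
    refine Real.le_sqrt_of_sq_le (hn₀.trans ?_)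
    exact_mod_cast (by omega : n₀ ≤ n)
  have hsmall : (D + 3) / √n ≤ (1 - ε) / 2 := by
    rw [div_le_iff₀ (by linarith)] at hbig
    rw [div_le_iff₀ hsn]
    linarith
  have h1 := hD n z hn0
  have e : (D + 3) / √n = D / √n + 3 / √n := add_div _ _ _
  rw [stdGaussianCdf_eq] at h1 ⊢
  by_contra! hcon
  have h2 := hgrow (fun i => z i / √n) ((D + 3) / c / √n) (by positivity)
    (by have := min_le_left ((1 - ε) / 2) ε; linarith)
    (by have := min_le_right ((1 - ε) / 2) ε; linarith)
  have e2 : c * ((D + 3) / c / √n) = (D + 3) / √n := by field_simp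
  linarith

/-! ### Laws on countable alphabets -/

/-- A sum of functions of i.i.d. variables is distributed according to a convolution power. -/
lemma map_sum_pi_eq_convPow {α : Type*} [MeasurableSpace α] (μ : Measure α)
    [IsProbabilityMeasure μ] {U : α → E} (hU : Measurable U) (n : ℕ) :
    (Measure.pi fun _ : Fin n => μ).map (fun x => ∑ k, U (x k)) = convPow (μ.map U) n := by
  have : IsProbabilityMeasure (μ.map U) := Measure.isProbabilityMeasure_map hU.aemeasurable
  have h1 : (Measure.pi fun _ : Fin n => μ).map (fun x => ∑ k, U (x k)) =
      (Measure.pi fun _ : Fin n => μ.map U).map (fun p => ∑ k, p k) := by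
    rw [← Measure.pi_map_pi fun _ => hU.aemeasurable, Measure.map_map (by fun_prop) (by fun_prop)]
    rfl
  have h2 : ∀ (n : ℕ) (t : E), charFun (convPow (μ.map U) n) t = charFun (μ.map U) t ^ n := by
    intro n t
    induction n with
    | zero => simp [convPow]
    | succ n ih => rw [convPow, charFun_conv, ih, pow_succ]
  have : IsProbabilityMeasure
      ((Measure.pi fun _ : Fin n => μ.map U).map (fun p => ∑ k, p k)) :=
    Measure.isProbabilityMeasure_map (by fun_prop)
  rw [h1]
  apply Measure.ext_of_charFun
  ext t
  rw [charFun_map_sum_pi_eq_prod, h2]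
  simp

/-- The measure with point masses `P x`; negative values of `P` count as zero. -/
noncomputable def massMeasure {α : Type*} [MeasurableSpace α] (P : α → ℝ) : Measure α :=
  Measure.sum fun x => ENNReal.ofReal (P x) • Measure.dirac x

lemma massMeasure_singleton {α : Type*} [MeasurableSpace α] [MeasurableSingletonClass α]
    (P : α → ℝ) (x : α) : massMeasure P {x} = ENNReal.ofReal (P x) := by
  rw [massMeasure, Measure.sum_smul_dirac_singleton]

lemma summable_of_tsum_eq_one {α : Type*} {P : α → ℝ} (h : ∑' x, P x = 1) : Summable P := by
  by_contra hs
  rw [tsum_eq_zero_of_not_summable hs] at h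
  exact zero_ne_one h

section
variable {α : Type*} [Countable α] [MeasurableSpace α] [MeasurableSingletonClass α] {P : α → ℝ}

lemma massMeasure_prob (h0 : ∀ x, 0 ≤ P x) (h : ∑' x, P x = 1) :
    IsProbabilityMeasure (massMeasure P) := by
  constructor
  rw [← Measure.tsum_indicator_apply_singleton _ _ MeasurableSet.univ]
  simp only [Set.indicator_univ, massMeasure_singleton]
  rw [← ENNReal.ofReal_tsum_of_nonneg h0 (summable_of_tsum_eq_one h), h, ENNReal.ofReal_one]

lemma integrable_massMeasure (h0 : ∀ x, 0 ≤ P x) {f : α → ℝ}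
    (hf : Summable fun x => P x * |f x|) : Integrable f (massMeasure P) := by
  refine ⟨(measurable_of_countable f).aestronglyMeasurable, ?_⟩
  rw [HasFiniteIntegral, lintegral_countable']
  have e : ∀ x, ‖f x‖ₑ * massMeasure P {x} = ENNReal.ofReal (P x * |f x|) := by
    intro x
    rw [massMeasure_singleton, Real.enorm_eq_ofReal_abs, ← ENNReal.ofReal_mul (abs_nonneg _),
      mul_comm]
  simp_rw [e]
  rw [← ENNReal.ofReal_tsum_of_nonneg (fun x => mul_nonneg (h0 x) (abs_nonneg _)) hf]
  exact ENNReal.ofReal_lt_top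

lemma integral_massMeasure (h0 : ∀ x, 0 ≤ P x) {f : α → ℝ}
    (hf : Summable fun x => P x * |f x|) :
    ∫ x, f x ∂(massMeasure P) = ∑' x, P x * f x := by
  rw [integral_countable (integrable_massMeasure h0 hf)]
  congr 1; ext x
  rw [Measure.real, massMeasure_singleton, ENNReal.toReal_ofReal (h0 x), smul_eq_mul]

/-- The law of the vector of centered informations is centered, with the entropy dispersion
matrix as covariance. -/
lemma centered_map (h0 : ∀ x, 0 ≤ P x) (h1 : ∑' x, P x = 1) (ι : Fin 3 → α → ℝ)
    (H : Fin 3 → ℝ) (hH : ∀ i, H i = ∑' x, P x * ι i x)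
    (V : Matrix (Fin 3) (Fin 3) ℝ)
    (hV : ∀ i j, V i j = ∑' x, P x * ((ι i x - H i) * (ι j x - H j)))
    (hT : ∀ i, Summable fun x => P x * |ι i x - H i| ^ 3) :
    Centered ((massMeasure P).map fun x => (WithLp.toLp 2 fun i => ι i x - H i : E)) V := by
  have := massMeasure_prob h0 h1
  have hs := summable_of_tsum_eq_one h1
  set U : α → E := fun x => WithLp.toLp 2 fun i => ι i x - H i with hU
  have hUm : Measurable U := measurable_of_countable U
  have hUi : ∀ x i, U x i = ι i x - H i := fun x i => rfl
  -- Every function dominated by the third powers is summable against `P`.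
  have hdom : ∀ f : α → ℝ, (∀ x, |f x| ≤ 9 * (1 + ∑ i, |U x i| ^ 3)) →
      Summable fun x => P x * |f x| := by
    intro f hf
    refine Summable.of_nonneg_of_le (fun x => mul_nonneg (h0 x) (abs_nonneg _))
      (fun x => mul_le_mul_of_nonneg_left (hf x) (h0 x)) ?_
    have : Summable fun x => P x + ∑ i, P x * |U x i| ^ 3 :=
      hs.add (summable_sum fun i _ => hT i)
    refine (this.mul_left 9).congr fun x => ?_
    rw [← Finset.mul_sum]; ring
  have hcoord : ∀ x i, |U x i| ^ 3 ≤ ∑ i, |U x i| ^ 3 := fun x i =>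
    Finset.single_le_sum (f := fun i => |U x i| ^ 3) (fun _ _ => by positivity)
      (Finset.mem_univ i)
  have hlin : ∀ a : ℝ, 0 ≤ a → a ≤ 1 + a ^ 3 ∧ a ^ 2 ≤ 1 + a ^ 3 := by
    intro a ha
    constructor <;> nlinarith [mul_nonneg ha (sq_nonneg (a - 1)), sq_nonneg (a - 1)]
  refine ⟨Measure.isProbabilityMeasure_map hUm.aemeasurable, ?_, fun i => ?_, fun i j => ?_⟩
  · rw [integrable_map_measure (by fun_prop) hUm.aemeasurable]
    refine integrable_massMeasure h0 (hdom _ fun x => ?_)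
    simp only [Function.comp_apply]
    rw [abs_of_nonneg (by positivity)]
    have hn : ‖U x‖ ≤ |U x 0| + |U x 1| + |U x 2| := by
      rw [EuclideanSpace.norm_eq, Real.sqrt_le_iff]
      refine ⟨by positivity, ?_⟩
      rw [Fin.sum_univ_three]
      simp only [Real.norm_eq_abs]
      nlinarith [mul_nonneg (abs_nonneg (U x 0)) (abs_nonneg (U x 1)),
        mul_nonneg (abs_nonneg (U x 0)) (abs_nonneg (U x 2)),
        mul_nonneg (abs_nonneg (U x 1)) (abs_nonneg (U x 2))]
    rw [Fin.sum_univ_three]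
    have p0 := abs_nonneg (U x 0)
    have p1 := abs_nonneg (U x 1)
    have p2 := abs_nonneg (U x 2)
    refine (pow_le_pow_left₀ (norm_nonneg _) hn 3).trans ?_
    generalize |U x 0| = a at *
    generalize |U x 1| = b at *
    generalize |U x 2| = c at *
    nlinarith [mul_nonneg (add_nonneg p0 p1) (sq_nonneg (a - b)),
      mul_nonneg (add_nonneg p0 p2) (sq_nonneg (a - c)),
      mul_nonneg (add_nonneg p1 p2) (sq_nonneg (b - c)),
      mul_nonneg p0 (sq_nonneg (b - c)), mul_nonneg p1 (sq_nonneg (a - c)),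
      mul_nonneg p2 (sq_nonneg (a - b))]
  · rw [integral_map hUm.aemeasurable (by fun_prop)]
    have hsU : Summable fun x => P x * |U x i| := hdom _ fun x => by
      have := (hlin _ (abs_nonneg (U x i))).1
      have := hcoord x i
      have : 0 ≤ |U x i| ^ 3 := by positivity
      linarith
    rw [integral_massMeasure h0 hsU]
    have hsU' : Summable fun x => P x * U x i := by
      refine Summable.of_abs (hsU.congr fun x => ?_)
      rw [abs_mul, abs_of_nonneg (h0 x)]
    have e : ∀ x, P x * U x i = P x * ι i x - P x * H i := fun x => by rw [hUi]; ring
    have hsι : Summable fun x => P x * ι i x := by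
      refine (hsU'.add (hs.mul_right (H i))).congr fun x => ?_
      rw [e]; ring
    simp_rw [e]
    rw [hsι.tsum_sub (hs.mul_right _), tsum_mul_right, h1, ← hH]
    ring
  · rw [integral_map hUm.aemeasurable (by fun_prop), integral_massMeasure h0, hV]
    refine hdom _ fun x => ?_
    rw [abs_mul]
    have a1 := (hlin _ (abs_nonneg (U x i))).2
    have a2 := (hlin _ (abs_nonneg (U x j))).2
    have b1 := hcoord x i
    have b2 := hcoord x j
    have : 0 ≤ ∑ i, |U x i| ^ 3 := by positivity
    nlinarith [sq_nonneg (|U x i| - |U x j|)]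

end

/-- On a set where `φ` is injective into a product with a finite factor `τ`, a measure whose point
masses are at most `c` times those of a probability measure on the second factor has mass at most
`c` times the size of `τ`. This is the counting step behind each of the three rate constraints. -/
lemma measure_le_of_injOn {X β τ : Type*} [Countable X] [MeasurableSpace X]
    [MeasurableSingletonClass X] [Countable β] [MeasurableSpace β] [MeasurableSingletonClass β]
    [Fintype τ] (μ : Measure X) (ν : Measure β) [IsProbabilityMeasure ν] (S : Set X)
    (φ : X → τ × β) (hφ : Set.InjOn φ S) (c : ENNReal)
    (h : ∀ x ∈ S, μ {x} ≤ c * ν {(φ x).2}) : μ S ≤ c * Fintype.card τ := by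
  have h1 : μ S = ∑' x : S, μ {(x : X)} := by
    rw [← Measure.tsum_indicator_apply_singleton μ S S.to_countable.measurableSet,
      tsum_subtype S fun x => μ {x}]
  have h2 : ∑' b, ν {b} = 1 := by
    have := Measure.tsum_indicator_apply_singleton ν Set.univ MeasurableSet.univ
    simpa using this
  calc μ S = ∑' x : S, μ {(x : X)} := h1
    _ ≤ ∑' x : S, c * ν {(φ x).2} := ENNReal.tsum_le_tsum fun x => h x x.2
    _ ≤ ∑' q : τ × β, c * ν {q.2} :=
        ENNReal.tsum_comp_le_tsum_of_injective (f := fun x : S => φ x)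
          (Set.injOn_iff_injective.1 hφ) fun q => c * ν {q.2}
    _ = c * Fintype.card τ := by
        rw [ENNReal.tsum_prod (f := fun (_ : τ) (b : β) => c * ν {b})]
        simp only [ENNReal.tsum_mul_left, h2, mul_one]
        rw [tsum_fintype, Finset.sum_const, Finset.card_univ, nsmul_eq_mul, mul_comm]

/-! ### Non-asymptotic converse -/

/-- If some `p k` vanishes, the left-hand product is zero, so the junk value of the corresponding
logarithm is harmless. -/
lemma prod_le_of_log_lt {n : ℕ} {p q : Fin n → ℝ} (hp : ∀ k, 0 ≤ p k) (hpq : ∀ k, p k ≤ q k)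
    {L : ℝ} (hL : 0 < L) (h : Real.log L < ∑ k, Real.log (q k / p k)) :
    ∏ k, p k ≤ L⁻¹ * ∏ k, q k := by
  by_cases h0 : ∃ k, p k = 0
  · obtain ⟨k, hk⟩ := h0
    rw [Finset.prod_eq_zero (Finset.mem_univ k) hk]
    exact mul_nonneg (inv_nonneg.2 hL.le)
      (Finset.prod_nonneg fun k _ => (hp k).trans (hpq k))
  · push Not at h0
    have hp' : ∀ k, 0 < p k := fun k => lt_of_le_of_ne (hp k) (h0 k).symm
    have hq' : ∀ k, 0 < q k := fun k => (hp' k).trans_le (hpq k)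
    rw [← Real.log_prod (fun k _ => (div_pos (hq' k) (hp' k)).ne')] at h
    have h2 := (Real.log_lt_log_iff hL (Finset.prod_pos fun k _ => div_pos (hq' k) (hp' k))).1 h
    have hpp : 0 < ∏ k, p k := Finset.prod_pos fun k _ => hp' k
    rw [Finset.prod_div_distrib, lt_div_iff₀ hpp] at h2
    rw [inv_mul_eq_div, le_div_iff₀ hL]
    linarith

/-- A set of source sequences that are determined by `e x`, given the side information `π ∘ x`,
and whose conditional information exceeds `log L`, has probability at most `card τ / L`. -/
lemma measure_bad_le {α γ τ : Type*} [Countable α] [MeasurableSpace α]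
    [MeasurableSingletonClass α] [Countable γ] [MeasurableSpace γ] [MeasurableSingletonClass γ]
    [Fintype τ] {P : α → ℝ} (h0 : ∀ x, 0 ≤ P x) (h1 : ∑' x, P x = 1) (π : α → γ) {Q : γ → ℝ}
    (hQ : ∀ c, (massMeasure P).map π {c} = ENNReal.ofReal (Q c)) (hQ0 : ∀ c, 0 ≤ Q c) {n : ℕ}
    (S : Set (Fin n → α)) (e : (Fin n → α) → τ)
    (hinj : Set.InjOn (fun x => (e x, fun k => π (x k))) S) {L : ℝ} (hL : 0 < L)
    (hS : ∀ x ∈ S, Real.log L < ∑ k, Real.log (Q (π (x k)) / P (x k))) :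
    (Measure.pi fun _ : Fin n => massMeasure P) S ≤
      ENNReal.ofReal L⁻¹ * Fintype.card τ := by
  have := massMeasure_prob h0 h1
  have hπ : Measurable π := measurable_of_countable π
  have : IsProbabilityMeasure ((massMeasure P).map π) :=
    Measure.isProbabilityMeasure_map hπ.aemeasurable
  have hPQ : ∀ a, P a ≤ Q (π a) := by
    intro a
    rw [← ENNReal.ofReal_le_ofReal_iff (hQ0 _), ← hQ, ← massMeasure_singleton P a,
      Measure.map_apply hπ (measurableSet_singleton _)]
    exact measure_mono (by simp)
  refine measure_le_of_injOn _ (Measure.pi fun _ : Fin n => (massMeasure P).map π) S _ hinj _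
    fun x hx => ?_
  rw [Measure.pi_singleton, Measure.pi_singleton]
  simp only [massMeasure_singleton, hQ]
  rw [← ENNReal.ofReal_prod_of_nonneg fun k _ => h0 _,
    ← ENNReal.ofReal_prod_of_nonneg fun k _ => hQ0 _,
    ← ENNReal.ofReal_mul (inv_nonneg.2 hL.le)]
  exact ENNReal.ofReal_le_ofReal
    (prod_le_of_log_lt (fun k => h0 _) (fun k => hPQ _) hL (hS x hx))

section
variable {𝒳₁ 𝒳₂ : Type*} [Countable 𝒳₁] [Countable 𝒳₂]
  [MeasurableSpace 𝒳₁] [MeasurableSingletonClass 𝒳₁] [MeasurableSpace 𝒳₂]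
  [MeasurableSingletonClass 𝒳₂] {P : 𝒳₁ × 𝒳₂ → ℝ}

lemma map_snd_singleton (h0 : ∀ x, 0 ≤ P x) (h1 : ∑' x, P x = 1) (b : 𝒳₂) :
    (massMeasure P).map Prod.snd {b} = ENNReal.ofReal (∑' a, P (a, b)) := by
  have hs := summable_of_tsum_eq_one h1
  rw [Measure.map_apply measurable_snd (measurableSet_singleton _),
    ← Measure.tsum_indicator_apply_singleton _ _ (measurable_snd (measurableSet_singleton _)),
    ENNReal.ofReal_tsum_of_nonneg (fun a => h0 _)
      (hs.comp_injective (Prod.mk_left_injective b)), ENNReal.tsum_prod']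
  refine tsum_congr fun a => ?_
  rw [tsum_eq_single b]
  · rw [Set.indicator_of_mem (by simp), massMeasure_singleton]
  · intro b' hb
    rw [Set.indicator_of_notMem (by simpa using hb)]

lemma map_fst_singleton (h0 : ∀ x, 0 ≤ P x) (h1 : ∑' x, P x = 1) (a : 𝒳₁) :
    (massMeasure P).map Prod.fst {a} = ENNReal.ofReal (∑' b, P (a, b)) := by
  have hs := summable_of_tsum_eq_one h1
  rw [Measure.map_apply measurable_fst (measurableSet_singleton _),
    ← Measure.tsum_indicator_apply_singleton _ _ (measurable_fst (measurableSet_singleton _)),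
    ENNReal.ofReal_tsum_of_nonneg (fun a => h0 _)
      (hs.comp_injective (Prod.mk_right_injective a)), ENNReal.tsum_prod', tsum_eq_single a]
  · refine tsum_congr fun b => ?_
    rw [Set.indicator_of_mem (by simp), massMeasure_singleton]
  · intro a' ha
    rw [ENNReal.tsum_eq_zero]
    intro b
    rw [Set.indicator_of_notMem (by simpa using ha)]

/-- The error probability of a code, as a sum over pairs of sequences, is the probability of the
set of incorrectly decoded sequences of pairs. -/
lemma error_eq [DecidableEq 𝒳₁] [DecidableEq 𝒳₂] (h0 : ∀ x, 0 ≤ P x) (h1 : ∑' x, P x = 1) {n : ℕ}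
    (d : (Fin n → 𝒳₁) × (Fin n → 𝒳₂) → (Fin n → 𝒳₁) × (Fin n → 𝒳₂)) :
    ∑' xy : (Fin n → 𝒳₁) × (Fin n → 𝒳₂),
      (if d xy = xy then (0 : ℝ) else ∏ i, P (xy.1 i, xy.2 i)) =
    (Measure.pi fun _ : Fin n => massMeasure P).real
      {x | d (Prod.fst ∘ x, Prod.snd ∘ x) = (Prod.fst ∘ x, Prod.snd ∘ x)}ᶜ := by
  have := massMeasure_prob h0 h1
  rw [← (Equiv.arrowProdEquivProdArrow (Fin n) (fun _ => 𝒳₁) (fun _ => 𝒳₂)).tsum_eq, Measure.real,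
    ← Measure.tsum_indicator_apply_singleton _ _ (Set.to_countable _).measurableSet,
    ENNReal.tsum_toReal_eq]
  · refine tsum_congr fun x => ?_
    rw [show Equiv.arrowProdEquivProdArrow (Fin n) (fun _ => 𝒳₁) (fun _ => 𝒳₂) x =
      (Prod.fst ∘ x, Prod.snd ∘ x) from rfl]
    by_cases hx : d (Prod.fst ∘ x, Prod.snd ∘ x) = (Prod.fst ∘ x, Prod.snd ∘ x)
    · rw [Set.indicator_of_notMem (by simpa using hx), if_pos hx]
      rfl
    · rw [Set.indicator_of_mem (by simpa using hx), if_neg hx, Measure.pi_singleton]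
      simp only [massMeasure_singleton]
      rw [← ENNReal.ofReal_prod_of_nonneg fun k _ => h0 _,
        ENNReal.toReal_ofReal (Finset.prod_nonneg fun k _ => h0 _)]
      rfl
  · intro x
    refine ne_top_of_le_ne_top (measure_ne_top (Measure.pi fun _ : Fin n => massMeasure P) {x}) ?_
    exact Set.indicator_le_self' (fun _ _ => zero_le) x

/-- The case `L = √n * card τ` of `measure_bad_le`: within a set `G` on which the message `e x` and
the side information determine `x`, the information exceeds the logarithm of the number of messages
by `(log n) / 2` with probability at most `1 / √n`. -/
lemma real_bad_le {α γ τ : Type*} [Countable α] [MeasurableSpace α]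
    [MeasurableSingletonClass α] [Countable γ] [MeasurableSpace γ] [MeasurableSingletonClass γ]
    [Fintype τ] {P : α → ℝ} (h0 : ∀ x, 0 ≤ P x) (h1 : ∑' x, P x = 1) (π : α → γ) {Q : γ → ℝ}
    (hQ : ∀ c, (massMeasure P).map π {c} = ENNReal.ofReal (Q c)) (hQ0 : ∀ c, 0 ≤ Q c) {n : ℕ}
    (hn : 0 < n) (G : Set (Fin n → α)) (e : (Fin n → α) → τ)
    (hinj : Set.InjOn (fun x => (e x, fun k => π (x k))) G) (hτ : 0 < Fintype.card τ)
    {ι : α → ℝ} (hι : ∀ x, ι x = Real.log (Q (π x) / P x)) {l : ℝ}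
    (hl : l = Real.log (Fintype.card τ)) :
    (Measure.pi fun _ : Fin n => massMeasure P).real
      (G ∩ {x | l + Real.log n / 2 < ∑ k, ι (x k)}) ≤ 1 / √n := by
  have hn' : (0 : ℝ) < √n := Real.sqrt_pos.2 (by exact_mod_cast hn)
  have hτ' : (0 : ℝ) < Fintype.card τ := by exact_mod_cast hτ
  have hb := measure_bad_le h0 h1 π hQ hQ0 (G ∩ {x | l + Real.log n / 2 < ∑ k, ι (x k)}) e
    (hinj.mono Set.inter_subset_left) (mul_pos hτ' hn') fun x hx => by
      rw [Real.log_mul hτ'.ne' hn'.ne', Real.log_sqrt (Nat.cast_nonneg n), ← hl]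
      have hx2 : l + Real.log n / 2 < ∑ k, ι (x k) := hx.2
      simpa only [hι] using hx2
  rw [← ENNReal.ofReal_natCast, ← ENNReal.ofReal_mul (by positivity)] at hb
  refine (ENNReal.toReal_le_of_le_ofReal (by positivity) hb).trans (le_of_eq ?_)
  field_simp

/-- The non-asymptotic converse: a code with error probability at most `ε` forces the information
sums to stay below the rates plus `(log n) / 2` with probability at least `1 - ε - 3 / √n`. -/
lemma converse_bound [DecidableEq 𝒳₁] [DecidableEq 𝒳₂] (h0 : ∀ x, 0 ≤ P x) (h1 : ∑' x, P x = 1)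
    {P1 : 𝒳₁ → ℝ} (hP1 : ∀ a, P1 a = ∑' b, P (a, b))
    {P2 : 𝒳₂ → ℝ} (hP2 : ∀ b, P2 b = ∑' a, P (a, b))
    {ι : Fin 3 → 𝒳₁ × 𝒳₂ → ℝ}
    (hι0 : ∀ x, ι 0 x = Real.log (P2 x.2 / P x))
    (hι1 : ∀ x, ι 1 x = Real.log (P1 x.1 / P x))
    (hι2 : ∀ x, ι 2 x = Real.log (1 / P x)) {ε : ℝ} {n : ℕ} (hn : 0 < n) {M₁ M₂ : ℕ}
    (hM₁ : 0 < M₁) (hM₂ : 0 < M₂)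
    (f₁ : (Fin n → 𝒳₁) → Fin M₁) (f₂ : (Fin n → 𝒳₂) → Fin M₂)
    (g : Fin M₁ × Fin M₂ → (Fin n → 𝒳₁) × (Fin n → 𝒳₂))
    (hg : (∑' xy : (Fin n → 𝒳₁) × (Fin n → 𝒳₂),
      if g (f₁ xy.1, f₂ xy.2) = xy then (0 : ℝ) else ∏ i, P (xy.1 i, xy.2 i)) ≤ ε) :
    1 - ε ≤ (Measure.pi fun _ : Fin n => massMeasure P).real
      {x | ∀ i, ∑ k, ι i (x k) ≤
        ![Real.log M₁, Real.log M₂, Real.log M₁ + Real.log M₂] i + Real.log n / 2} + 3 / √n := by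
  have := massMeasure_prob h0 h1
  set l : Fin 3 → ℝ := ![Real.log M₁, Real.log M₂, Real.log M₁ + Real.log M₂] with hl
  set μ := Measure.pi fun _ : Fin n => massMeasure P with hμ
  rw [error_eq h0 h1 (fun xy => g (f₁ xy.1, f₂ xy.2))] at hg
  set G : Set (Fin n → 𝒳₁ × 𝒳₂) := {x | g (f₁ (Prod.fst ∘ x), f₂ (Prod.snd ∘ x)) =
    (Prod.fst ∘ x, Prod.snd ∘ x)} with hG
  -- On `G` the pair of messages determines the source.
  have hdec : ∀ x ∈ G, ∀ y ∈ G, f₁ (Prod.fst ∘ x) = f₁ (Prod.fst ∘ y) →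
      f₂ (Prod.snd ∘ x) = f₂ (Prod.snd ∘ y) → x = y := by
    intro x hx y hy e1 e2
    have hx' : g (f₁ (Prod.fst ∘ x), f₂ (Prod.snd ∘ x)) = (Prod.fst ∘ x, Prod.snd ∘ x) := hx
    have hy' : g (f₁ (Prod.fst ∘ y), f₂ (Prod.snd ∘ y)) = (Prod.fst ∘ y, Prod.snd ∘ y) := hy
    rw [e1, e2, hy', Prod.mk.injEq] at hx'
    funext k
    exact Prod.ext (congrFun hx'.1 k).symm (congrFun hx'.2 k).symm
  have b0 : μ.real (G ∩ {x | l 0 + Real.log n / 2 < ∑ k, ι 0 (x k)}) ≤ 1 / √n := by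
    refine real_bad_le h0 h1 Prod.snd (Q := P2)
      (fun b => by rw [map_snd_singleton h0 h1, hP2])
      (fun b => by rw [hP2]; exact tsum_nonneg fun _ => h0 _) hn G
      (fun x => f₁ (Prod.fst ∘ x)) ?_ (by simpa using hM₁) hι0 (by simp [hl])
    intro x hx y hy h
    simp only [Prod.mk.injEq] at h
    exact hdec x hx y hy h.1 (congrArg f₂ h.2)
  have b1 : μ.real (G ∩ {x | l 1 + Real.log n / 2 < ∑ k, ι 1 (x k)}) ≤ 1 / √n := by
    refine real_bad_le h0 h1 Prod.fst (Q := P1)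
      (fun b => by rw [map_fst_singleton h0 h1, hP1])
      (fun b => by rw [hP1]; exact tsum_nonneg fun _ => h0 _) hn G
      (fun x => f₂ (Prod.snd ∘ x)) ?_ (by simpa using hM₂) hι1 (by simp [hl])
    intro x hx y hy h
    simp only [Prod.mk.injEq] at h
    exact hdec x hx y hy (congrArg f₁ h.2) h.1
  have b2 : μ.real (G ∩ {x | l 2 + Real.log n / 2 < ∑ k, ι 2 (x k)}) ≤ 1 / √n := by
    refine real_bad_le h0 h1 (fun _ => ()) (Q := fun _ => 1)
      (fun b => by rw [Measure.map_const]; simp) (fun _ => zero_le_one) hn G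
      (fun x => (f₁ (Prod.fst ∘ x), f₂ (Prod.snd ∘ x))) ?_
      (by simpa using ⟨hM₁, hM₂⟩) hι2 ?_
    · intro x hx y hy h
      simp only [Prod.mk.injEq] at h
      exact hdec x hx y hy h.1.1 h.1.2
    · have : (M₁ : ℝ) ≠ 0 := by exact_mod_cast hM₁.ne'
      have : (M₂ : ℝ) ≠ 0 := by exact_mod_cast hM₂.ne'
      simp [Real.log_mul, *]
  have hcover : (Set.univ : Set (Fin n → 𝒳₁ × 𝒳₂)) ⊆
      Gᶜ ∪ ({x | ∀ i, ∑ k, ι i (x k) ≤ l i + Real.log n / 2} ∪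
        ((G ∩ {x | l 0 + Real.log n / 2 < ∑ k, ι 0 (x k)}) ∪
        ((G ∩ {x | l 1 + Real.log n / 2 < ∑ k, ι 1 (x k)}) ∪
        (G ∩ {x | l 2 + Real.log n / 2 < ∑ k, ι 2 (x k)})))) := by
    intro x _
    by_cases hx : x ∈ G
    · right
      by_cases hall : ∀ i, ∑ k, ι i (x k) ≤ l i + Real.log n / 2
      · exact Or.inl hall
      · right
        push Not at hall
        obtain ⟨i, hi⟩ := hall
        fin_cases i
        · exact Or.inl ⟨hx, hi⟩
        · exact Or.inr (Or.inl ⟨hx, hi⟩)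
        · exact Or.inr (Or.inr ⟨hx, hi⟩)
    · exact Or.inl hx
  have htot := measureReal_mono (μ := μ) hcover
  rw [probReal_univ] at htot
  have u1 := measureReal_union_le (μ := μ) Gᶜ
    ({x | ∀ i, ∑ k, ι i (x k) ≤ l i + Real.log n / 2} ∪
        ((G ∩ {x | l 0 + Real.log n / 2 < ∑ k, ι 0 (x k)}) ∪
        ((G ∩ {x | l 1 + Real.log n / 2 < ∑ k, ι 1 (x k)}) ∪
        (G ∩ {x | l 2 + Real.log n / 2 < ∑ k, ι 2 (x k)}))))
  have u2 := measureReal_union_le (μ := μ) {x | ∀ i, ∑ k, ι i (x k) ≤ l i + Real.log n / 2}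
        ((G ∩ {x | l 0 + Real.log n / 2 < ∑ k, ι 0 (x k)}) ∪
        ((G ∩ {x | l 1 + Real.log n / 2 < ∑ k, ι 1 (x k)}) ∪
        (G ∩ {x | l 2 + Real.log n / 2 < ∑ k, ι 2 (x k)})))
  have u3 := measureReal_union_le (μ := μ) (G ∩ {x | l 0 + Real.log n / 2 < ∑ k, ι 0 (x k)})
        ((G ∩ {x | l 1 + Real.log n / 2 < ∑ k, ι 1 (x k)}) ∪
        (G ∩ {x | l 2 + Real.log n / 2 < ∑ k, ι 2 (x k)}))
  have u4 := measureReal_union_le (μ := μ) (G ∩ {x | l 1 + Real.log n / 2 < ∑ k, ι 1 (x k)})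
        (G ∩ {x | l 2 + Real.log n / 2 < ∑ k, ι 2 (x k)})
  have e3 : 3 / √(n : ℝ) = 1 / √n + 1 / √n + 1 / √n := by ring
  linarith

end

end MascConverse

/-- **Third-order MASC rate region, converse.**
For i.i.d. pairs with single-letter joint distribution `P` on countable alphabets satisfying
`V(X₁,X₂) > 0`, `V(X₁|X₂) > 0`, `V(X₂|X₁) > 0` and finite third central moments of the
informations, and any `ε ∈ (0,1)`: there are `C' ≥ 0` and `n₀` such that for all `n ≥ n₀`,
every `(n,M₁,M₂,ε)` MASC satisfies
`√n·(R̄ − H̄ + (log n/(2n))·1 + (C'/n)·1) ∈ Q_inv(𝖵,ε)`, where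
`R₁ = (log M₁)/n`, `R₂ = (log M₂)/n`. -/
theorem masc_third_order_converse
    {𝒳₁ 𝒳₂ : Type*} [Countable 𝒳₁] [Countable 𝒳₂] [DecidableEq 𝒳₁] [DecidableEq 𝒳₂]
    (P : 𝒳₁ × 𝒳₂ → ℝ) (hP0 : ∀ x, 0 ≤ P x) (hPsum : ∑' x, P x = 1)
    (P1 : 𝒳₁ → ℝ) (hP1 : ∀ a, P1 a = ∑' b, P (a, b))
    (P2 : 𝒳₂ → ℝ) (hP2 : ∀ b, P2 b = ∑' a, P (a, b))
    (ι : Fin 3 → 𝒳₁ × 𝒳₂ → ℝ)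
    (hι0 : ∀ x, ι 0 x = Real.log (P2 x.2 / P x))
    (hι1 : ∀ x, ι 1 x = Real.log (P1 x.1 / P x))
    (hι2 : ∀ x, ι 2 x = Real.log (1 / P x))
    (Hbar : Fin 3 → ℝ) (hH : ∀ i, Hbar i = ∑' x, P x * ι i x)
    (V : Matrix (Fin 3) (Fin 3) ℝ)
    (hV : ∀ i j, V i j = ∑' x, P x * ((ι i x - Hbar i) * (ι j x - Hbar j)))
    (A : Matrix (Fin 3) (Fin 3) ℝ) (hA : A * A.transpose = V)
    (hV0 : 0 < V 0 0) (hV1 : 0 < V 1 1) (hV2 : 0 < V 2 2)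
    (hT0 : Summable fun x => P x * |ι 0 x - Hbar 0| ^ 3)
    (hT1 : Summable fun x => P x * |ι 1 x - Hbar 1| ^ 3)
    (hT2 : Summable fun x => P x * |ι 2 x - Hbar 2| ^ 3)
    (ε : ℝ) (hε : ε ∈ Set.Ioo (0 : ℝ) 1) :
    ∃ C' : ℝ, 0 ≤ C' ∧ ∃ n₀ : ℕ, ∀ n : ℕ, n₀ ≤ n → ∀ M₁ M₂ : ℕ, 0 < M₁ → 0 < M₂ →
      (∃ f₁ : (Fin n → 𝒳₁) → Fin M₁, ∃ f₂ : (Fin n → 𝒳₂) → Fin M₂,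
        ∃ g : Fin M₁ × Fin M₂ → (Fin n → 𝒳₁) × (Fin n → 𝒳₂),
          (∑' xy : (Fin n → 𝒳₁) × (Fin n → 𝒳₂),
              if g (f₁ xy.1, f₂ xy.2) = xy then (0 : ℝ)
              else ∏ i, P (xy.1 i, xy.2 i)) ≤ ε) →
      1 - ε ≤ stdGaussianCdf A (fun i =>
          Real.sqrt (n : ℝ) *
            (![Real.log (M₁ : ℝ) / (n : ℝ), Real.log (M₂ : ℝ) / (n : ℝ),
                Real.log (M₁ : ℝ) / (n : ℝ) + Real.log (M₂ : ℝ) / (n : ℝ)] i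
              - Hbar i + Real.log (n : ℝ) / (2 * (n : ℝ)) + C' / (n : ℝ))) := by
  -- On countable alphabets every set is made measurable.
  let _ : MeasurableSpace 𝒳₁ := ⊤
  let _ : MeasurableSpace 𝒳₂ := ⊤
  have hpr := MascConverse.massMeasure_prob hP0 hPsum
  have hT : ∀ i, Summable fun x => P x * |ι i x - Hbar i| ^ 3 := by
    intro i
    fin_cases i
    exacts [hT0, hT1, hT2]
  have hρ := MascConverse.centered_map hP0 hPsum ι Hbar hH V hV hT
  rw [← hA] at hρ
  have hd : ∀ i, 0 < (A * A.transpose) i i := by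
    intro i
    rw [hA]
    fin_cases i
    exacts [hV0, hV1, hV2]
  obtain ⟨C', hC', n₀, hn₀, h⟩ := MascConverse.cdf_lower_bound hρ hd hε
  refine ⟨C', hC', n₀, fun n hn M₁ M₂ hM₁ hM₂ ⟨f₁, f₂, g, hg⟩ => ?_⟩
  have hn0 : 0 < n := hn₀.trans_le hn
  have hb := MascConverse.converse_bound hP0 hPsum hP1 hP2 hι0 hι1 hι2 hn0 hM₁ hM₂ f₁ f₂ g hg
  have hz := h n hn (fun i => ![Real.log M₁, Real.log M₂, Real.log M₁ + Real.log M₂] i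
    + Real.log n / 2 - n * Hbar i) ?_
  · convert hz using 2
    funext i
    have hs : √(n : ℝ) ≠ 0 := (Real.sqrt_pos.2 (by exact_mod_cast hn0)).ne'
    have hnn : (n : ℝ) = √n * √n := (Real.mul_self_sqrt (Nat.cast_nonneg n)).symm
    have hn1 : (n : ℝ) ≠ 0 := by exact_mod_cast hn0.ne'
    have key : ∀ a : ℝ, √(n : ℝ) * (a / n - Hbar i + Real.log n / (2 * n) + C' / n) =
        (a + Real.log n / 2 - n * Hbar i) / √n + C' / √n := by
      intro a
      generalize Real.log (n : ℝ) = l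
      rw [hnn]
      simp only [Real.sqrt_mul_self (Real.sqrt_nonneg _)]
      field_simp
      ring
    rw [← key]
    fin_cases i <;> simp [add_div]
  · refine hb.trans_eq ?_
    congr 1
    rw [← MascConverse.map_sum_pi_eq_convPow _ (measurable_of_countable _),
      MeasureTheory.map_measureReal_apply (by fun_prop) (MascConverse.measurableSet_orthant _)]
    congr 1
    ext x
    refine forall_congr' fun i => ?_
    simp
end

section
/- Third-order optimality of the MASC sum rate at non-corner points for dependent sources: Let (X₁,X₂) have joint distribution P_{X₁X₂} on countable alphabets with H(X₁,X₂) < ∞, suppose X₁ and X₂ are not independent, and assume V(X₁|X₂) > 0, V(X₂|X₁) > 0, and V(X₁,X₂) > 0. Fix constants δ₁, δ₂, G > 0 and ε ∈ (0,1). Then there exists n₀ = n₀(δ₁,δ₂,G) such that for all n > n₀ (in particular such that ε − G/√n ∈ (0,1)): if (R₁,R₂) ∈ ℝ² satisfies R₁ ≤ H(X₁) − δ₁, R₂ ≤ H(X₂) − δ₂, and R₁ + R₂ = H(X₁,X₂) + √(V(X₁,X₂)/n)·Q⁻¹(ε − G/√n) − (log n)/(2n), then √n·( R̄ − H̄ +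 ((log n)/(2n))·1 ) ∈ Q_inv(𝖵,ε). -/
/-!
At a non-corner point only the sum-rate constraint is active. With `Z = A·W`, the third
threshold is exactly `√V₂₂ · r`, so `P[Z₂ ≤ z₂] = Φ(r) = 1 - ε + G/√n`
(`gaussian_linear_Iic_sqrt_mul`). Since `R₂ ≤ H(X₂) - δ₂` and the sum rate is fixed, the chain
rule `H(X₁|X₂) = H(X₁,X₂) - H(X₂)` (`condEntropy_eq`) forces
`z₀ ≥ √n·δ₂ + √V₂₂·r`, and symmetrically for `z₁`. The parameter `r` stays above a constant
because `Φ(r) ≥ 1 - ε > 0`, so both thresholds grow like `√n` and Chebyshev's inequality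
(`gaussian_linear_tail`) makes `P[Z₀ > z₀]` and `P[Z₁ > z₁]` of order `1/n`. The union bound
therefore loses at most `O(1/n)`, which the surplus `G/√n` absorbs for large `n`.
Neither Berry-Esseen nor sharp Gaussian tails are needed.
-/

/-- The standard normal cumulative distribution function `Φ`. -/
noncomputable def stdNormalCDF (z : ℝ) : ℝ :=
  ((ProbabilityTheory.gaussianReal 0 1) (Set.Iic z)).toReal

open MeasureTheory ProbabilityTheory Filter Topology

/-! ### Gaussian linear forms -/

/-- Independent standard Gaussians combine linearly to a centred Gaussian whose variance is the
sum of the squared coefficients; read off from the characteristic function. -/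
lemma gaussian_linear_map {d : ℕ} (a : Fin d → ℝ) :
    Measure.map (fun w : Fin d → ℝ => ∑ j, a j * w j)
      (Measure.pi fun _ : Fin d => gaussianReal 0 1)
      = gaussianReal 0 (∑ j, a j ^ 2).toNNReal := by
  have hm : Measurable (fun w : Fin d → ℝ => ∑ j, a j * w j) := by fun_prop
  have : IsProbabilityMeasure (Measure.map (fun w : Fin d → ℝ => ∑ j, a j * w j)
      (Measure.pi fun _ : Fin d => gaussianReal 0 1)) :=
    Measure.isProbabilityMeasure_map hm.aemeasurable
  apply Measure.ext_of_charFun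
  ext t
  rw [charFun_apply_real, integral_map hm.aemeasurable (by fun_prop), charFun_gaussianReal]
  have h1 : ∀ w : Fin d → ℝ, Complex.exp (t * ((∑ j, a j * w j : ℝ) : ℂ) * Complex.I)
      = ∏ j, Complex.exp (((t * a j : ℝ) : ℂ) * (w j : ℂ) * Complex.I) := by
    intro w
    rw [← Complex.exp_sum]
    push_cast
    rw [Finset.mul_sum, Finset.sum_mul]
    congr 1
    refine Finset.sum_congr rfl fun j _ => ?_
    ring
  simp_rw [h1]
  rw [integral_fintype_prod_eq_prod
    (f := fun j (x : ℝ) => Complex.exp (((t * a j : ℝ) : ℂ) * (x : ℂ) * Complex.I))]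
  have h2 : ∀ j, ∫ x : ℝ, Complex.exp (((t * a j : ℝ) : ℂ) * (x : ℂ) * Complex.I)
      ∂(gaussianReal 0 1) = Complex.exp (-(((t * a j) ^ 2 / 2 : ℝ) : ℂ)) := by
    intro j
    rw [← charFun_apply_real, charFun_gaussianReal]
    congr 1
    push_cast
    simp
  simp_rw [h2]
  rw [← Complex.exp_sum]
  congr 1
  have h3 : (((∑ j, a j ^ 2).toNNReal : ℝ) : ℂ) = ((∑ j, a j ^ 2 : ℝ) : ℂ) := by
    rw [Real.coe_toNNReal _ (Finset.sum_nonneg fun j _ => sq_nonneg _)]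
  rw [h3]
  push_cast
  simp only [mul_zero, zero_mul, zero_sub]
  rw [Finset.sum_mul, Finset.sum_div, ← Finset.sum_neg_distrib]
  refine Finset.sum_congr rfl fun j _ => ?_
  ring

lemma gaussian_linear_tail {d : ℕ} (a : Fin d → ℝ) {c : ℝ} (hc : 0 < c) :
    (Measure.pi fun _ : Fin d => gaussianReal 0 1).real {w | c < ∑ j, a j * w j}
      ≤ (∑ j, a j ^ 2) / c ^ 2 := by
  have hm : Measurable (fun w : Fin d → ℝ => ∑ j, a j * w j) := by fun_prop
  have hv : 0 ≤ ∑ j, a j ^ 2 := Finset.sum_nonneg fun j _ => sq_nonneg _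
  have h0 : (Measure.pi fun _ : Fin d => gaussianReal 0 1) {w | c < ∑ j, a j * w j}
      = gaussianReal 0 (∑ j, a j ^ 2).toNNReal (Set.Ioi c) := by
    rw [← gaussian_linear_map, Measure.map_apply hm measurableSet_Ioi]
    rfl
  rw [Measure.real, h0]
  have h1 := meas_ge_le_variance_div_sq (μ := gaussianReal 0 (∑ j, a j ^ 2).toNNReal)
    (X := id) (memLp_id_gaussianReal 2) hc
  rw [variance_id_gaussianReal, Real.coe_toNNReal _ hv] at h1
  refine ENNReal.toReal_le_of_le_ofReal (by positivity) (le_trans (measure_mono ?_) h1)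
  intro x hx
  have hx' : c < x := hx
  simp only [id, Set.mem_ofPred_eq, integral_id_gaussianReal, sub_zero]
  exact hx'.le.trans (le_abs_self x)

lemma gaussian_linear_Iic_sqrt_mul {d : ℕ} (a : Fin d → ℝ) (hv : 0 < ∑ j, a j ^ 2) (r : ℝ) :
    (Measure.pi fun _ : Fin d => gaussianReal 0 1).real
      {w | ∑ j, a j * w j ≤ Real.sqrt (∑ j, a j ^ 2) * r} = stdNormalCDF r := by
  have hm : Measurable (fun w : Fin d → ℝ => ∑ j, a j * w j) := by fun_prop
  have hs := Real.sqrt_pos.mpr hv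
  have h0 : (Measure.pi fun _ : Fin d => gaussianReal 0 1)
      {w | ∑ j, a j * w j ≤ Real.sqrt (∑ j, a j ^ 2) * r}
      = gaussianReal 0 (∑ j, a j ^ 2).toNNReal (Set.Iic (Real.sqrt (∑ j, a j ^ 2) * r)) := by
    rw [← gaussian_linear_map, Measure.map_apply hm measurableSet_Iic]
    rfl
  have h1 : gaussianReal 0 (∑ j, a j ^ 2).toNNReal
      = (gaussianReal 0 1).map (Real.sqrt (∑ j, a j ^ 2) * ·) := by
    rw [gaussianReal_map_const_mul]
    congr 1
    · simp
    · ext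
      simp [Real.sq_sqrt hv.le, hv.le]
  rw [Measure.real, h0, h1, Measure.map_apply (by fun_prop) measurableSet_Iic, stdNormalCDF]
  congr 2
  ext x
  exact mul_le_mul_iff_right₀ hs

/-- Union bound over three linear forms, the first two controlled by Chebyshev's inequality. -/
lemma stdGaussianCdf_ge (A : Matrix (Fin 3) (Fin 3) ℝ) (z : Fin 3 → ℝ) (r : ℝ)
    (h2 : 0 < ∑ j, A 2 j ^ 2) (hz0 : 0 < z 0) (hz1 : 0 < z 1)
    (hz2 : z 2 = Real.sqrt (∑ j, A 2 j ^ 2) * r) :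
    stdNormalCDF r - (∑ j, A 0 j ^ 2) / z 0 ^ 2 - (∑ j, A 1 j ^ 2) / z 1 ^ 2
      ≤ stdGaussianCdf A z := by
  have hm : Measurable (fun w : Fin 3 → ℝ => A.mulVec w) :=
    (Continuous.matrix_mulVec continuous_const continuous_id).measurable
  have hS : MeasurableSet {y : Fin 3 → ℝ | ∀ i, y i ≤ z i} := by
    have : {y : Fin 3 → ℝ | ∀ i, y i ≤ z i} = Set.Iic z := by
      ext y; simp [Pi.le_def]
    rw [this]; exact measurableSet_Iic
  rw [stdGaussianCdf, Measure.map_apply hm hS]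
  change _ ≤ (Measure.pi fun _ : Fin 3 => gaussianReal 0 1).real _
  have e0 := gaussian_linear_tail (A 0) hz0
  have e1 := gaussian_linear_tail (A 1) hz1
  have e2 := gaussian_linear_Iic_sqrt_mul (A 2) h2 r
  rw [← hz2] at e2
  set μ := Measure.pi fun _ : Fin 3 => gaussianReal 0 1
  have hsub : {w : Fin 3 → ℝ | ∑ j, A 2 j * w j ≤ z 2} ⊆
      ((fun w => A.mulVec w) ⁻¹' {y | ∀ i, y i ≤ z i}
        ∪ {w | z 0 < ∑ j, A 0 j * w j}) ∪ {w | z 1 < ∑ j, A 1 j * w j} := by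
    intro w hw
    by_cases c0 : z 0 < ∑ j, A 0 j * w j
    · exact Or.inl (Or.inr c0)
    by_cases c1 : z 1 < ∑ j, A 1 j * w j
    · exact Or.inr c1
    refine Or.inl (Or.inl ?_)
    intro i
    fin_cases i
    · exact not_lt.mp c0
    · exact not_lt.mp c1
    · exact hw
  have hle := measureReal_mono (μ := μ) hsub
  have u1 := measureReal_union_le (μ := μ)
    ((fun w => A.mulVec w) ⁻¹' {y | ∀ i, y i ≤ z i} ∪ {w | z 0 < ∑ j, A 0 j * w j})
    {w | z 1 < ∑ j, A 1 j * w j}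
  have u2 := measureReal_union_le (μ := μ)
    ((fun w => A.mulVec w) ⁻¹' {y | ∀ i, y i ≤ z i}) {w | z 0 < ∑ j, A 0 j * w j}
  linarith

lemma exists_lt_of_stdNormalCDF_ge {p : ℝ} (hp : 0 < p) :
    ∃ r₀ : ℝ, ∀ r, p ≤ stdNormalCDF r → r₀ < r := by
  have hc : ∀ r, stdNormalCDF r = cdf (gaussianReal 0 1) r := fun r => by
    rw [cdf_eq_real]; rfl
  obtain ⟨r₀, h⟩ := ((tendsto_cdf_atBot (gaussianReal 0 1)).eventually_lt_const hp).exists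
  refine ⟨r₀, fun r hr => ?_⟩
  by_contra! hcon
  have := monotone_cdf (gaussianReal 0 1) hcon
  rw [hc] at hr
  linarith

/-! ### The chain rule for entropy -/

/-- Chain rule, with the conditioning variable `Y = f(X)` a function of the outcome. The
entropy of `Y` is expressed as a sum over outcomes; it converges because `P x ≤ q (f x) ≤ 1`
bounds its terms by those of the entropy of `X`. -/
lemma tsum_mul_condInfo {α β : Type*} (P : α → ℝ) (f : α → β) (q : β → ℝ)
    (hP0 : ∀ x, 0 ≤ P x) (hle : ∀ x, P x ≤ q (f x)) (hq1 : ∀ x, q (f x) ≤ 1)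
    (hsum : Summable fun x => P x * Real.log (1 / P x)) :
    (Summable fun x => P x * Real.log (1 / q (f x))) ∧
    ∑' x, P x * Real.log (q (f x) / P x)
      = ∑' x, P x * Real.log (1 / P x) - ∑' x, P x * Real.log (1 / q (f x)) := by
  have hs : Summable fun x => P x * Real.log (1 / q (f x)) := by
    refine Summable.of_nonneg_of_le (fun x => ?_) (fun x => ?_) hsum
    · rcases (hP0 x).eq_or_lt with h | h
      · simp [← h]
      · refine mul_nonneg (hP0 x) (Real.log_nonneg ?_)
        rw [le_div_iff₀ (h.trans_le (hle x))]
        simpa using hq1 x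
    · rcases (hP0 x).eq_or_lt with h | h
      · simp [← h]
      · have hq := h.trans_le (hle x)
        exact mul_le_mul_of_nonneg_left
          (Real.log_le_log (by positivity) (one_div_le_one_div_of_le h (hle x))) (hP0 x)
  refine ⟨hs, ?_⟩
  rw [← hsum.tsum_sub hs]
  refine tsum_congr fun x => ?_
  -- outcomes of probability zero contribute nothing, whatever the value of `log` there
  rcases (hP0 x).eq_or_lt with h | h
  · simp [← h]
  · have hq := h.trans_le (hle x)
    rw [Real.log_div hq.ne' h.ne', one_div, one_div, Real.log_inv, Real.log_inv]
    ring

lemma tsum_prod_fst {α β : Type*} (P : α × β → ℝ) (P1 : α → ℝ)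
    (hP1 : ∀ a, P1 a = ∑' b, P (a, b)) (g : α → ℝ)
    (hs : Summable fun x : α × β => P x * g x.1) :
    ∑' x : α × β, P x * g x.1 = ∑' a, P1 a * g a := by
  rw [hs.tsum_prod]
  exact tsum_congr fun a => by
    rw [hP1]
    exact tsum_mul_right (f := fun b => P (a, b)) (a := g a)

lemma marginal_bounds {α β : Type*} (P : α × β → ℝ) (hP0 : ∀ x, 0 ≤ P x)
    (hPsum : ∑' x, P x = 1) (P1 : α → ℝ) (hP1 : ∀ a, P1 a = ∑' b, P (a, b)) (x : α × β) :
    P x ≤ P1 x.1 ∧ P1 x.1 ≤ 1 := by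
  have hs : Summable P := by
    by_contra h
    rw [tsum_eq_zero_of_not_summable h] at hPsum
    exact zero_ne_one hPsum
  have hinj : Function.Injective fun b : β => (x.1, b) := fun b c h => (Prod.ext_iff.mp h).2
  have hrow : Summable fun b => P (x.1, b) := hs.comp_injective hinj
  rw [hP1]
  refine ⟨hrow.le_tsum x.2 fun b _ => hP0 _, ?_⟩
  rw [← hPsum]
  exact Summable.tsum_le_tsum_of_inj (fun b : β => (x.1, b)) hinj (fun c _ => hP0 c)
    (fun _ => le_rfl) hrow hs

/-- `H(X₂|X₁) = H(X₁,X₂) - H(X₁)`. -/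
lemma condEntropy_eq {α β : Type*} (P : α × β → ℝ) (hP0 : ∀ x, 0 ≤ P x)
    (hPsum : ∑' x, P x = 1) (P1 : α → ℝ) (hP1 : ∀ a, P1 a = ∑' b, P (a, b))
    (hsum : Summable fun x => P x * Real.log (1 / P x)) :
    ∑' x, P x * Real.log (P1 x.1 / P x)
      = ∑' x, P x * Real.log (1 / P x) - ∑' a, P1 a * Real.log (1 / P1 a) := by
  have hb := marginal_bounds P hP0 hPsum P1 hP1
  obtain ⟨hs, he⟩ := tsum_mul_condInfo P Prod.fst P1 hP0 (fun x => (hb x).1)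
    (fun x => (hb x).2) hsum
  rw [he, tsum_prod_fst P P1 hP1 (fun a => Real.log (1 / P1 a)) hs]

/-! ### The rate region -/

/-- For `s = √n` large, a threshold of size at least `s * δ + c` lies outside the bulk: it is
positive and the Chebyshev bound at it costs at most half of the surplus `G / s`. -/
lemma eventually_threshold (v δ G c : ℝ) (hv : 0 ≤ v) (hδ : 0 < δ) (hG : 0 < G) :
    ∀ᶠ s : ℝ in atTop, ∀ z, s * δ + c ≤ z → 0 < z ∧ v / z ^ 2 ≤ G / s / 2 := by
  filter_upwards [eventually_gt_atTop 0, eventually_ge_atTop (-2 * c / δ),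
    eventually_ge_atTop (8 * v / (G * δ ^ 2))] with s hs h1 h2 z hz
  rw [div_le_iff₀ hδ] at h1
  rw [div_le_iff₀ (by positivity)] at h2
  -- half of `s * δ` outweighs the constant `c`
  have hz' : s * δ / 2 ≤ z := by linarith
  have hp : 0 < s * δ / 2 := by positivity
  refine ⟨hp.trans_le hz', ?_⟩
  calc v / z ^ 2 ≤ v / (s * δ / 2) ^ 2 := by gcongr
    _ ≤ G / s / 2 := by
      rw [div_div, div_le_div_iff₀ (by positivity) (by positivity)]
      nlinarith [mul_le_mul_of_nonneg_right h2 hs.le]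

/-- **Third-order optimality of the MASC sum rate at non-corner points for dependent
sources.** Let `(X₁,X₂)` have joint distribution `P` on countable alphabets with
`H(X₁,X₂) < ∞`, `X₁` and `X₂` not independent, and positive (conditional) varentropies.
Fix `δ₁, δ₂, G > 0` and `ε ∈ (0,1)`. Then there is `n₀` such that for all `n > n₀`
(in particular with `ε − G/√n ∈ (0,1)`): if `R₁ ≤ H(X₁) − δ₁`, `R₂ ≤ H(X₂) − δ₂` and
`R₁ + R₂ = H(X₁,X₂) + √(V(X₁,X₂)/n)·Q⁻¹(ε − G/√n) − (log n)/(2n)`, then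
`√n·(R̄ − H̄ + (log n/(2n))·1) ∈ Q_inv(𝖵,ε)`. -/
theorem masc_sum_rate_noncorner_dependent
    {𝒳₁ 𝒳₂ : Type*} [Countable 𝒳₁] [Countable 𝒳₂]
    (P : 𝒳₁ × 𝒳₂ → ℝ) (hP0 : ∀ x, 0 ≤ P x) (hPsum : ∑' x, P x = 1)
    (P1 : 𝒳₁ → ℝ) (hP1 : ∀ a, P1 a = ∑' b, P (a, b))
    (P2 : 𝒳₂ → ℝ) (hP2 : ∀ b, P2 b = ∑' a, P (a, b))
    (ι : Fin 3 → 𝒳₁ × 𝒳₂ → ℝ)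
    (hι0 : ∀ x, ι 0 x = Real.log (P2 x.2 / P x))
    (hι1 : ∀ x, ι 1 x = Real.log (P1 x.1 / P x))
    (hι2 : ∀ x, ι 2 x = Real.log (1 / P x))
    (Hbar : Fin 3 → ℝ) (hH : ∀ i, Hbar i = ∑' x, P x * ι i x)
    (hHfin : Summable fun x => P x * ι 2 x)
    (hdep : ¬ ∀ x : 𝒳₁ × 𝒳₂, P x = P1 x.1 * P2 x.2)
    (V : Matrix (Fin 3) (Fin 3) ℝ)
    (hV : ∀ i j, V i j = ∑' x, P x * ((ι i x - Hbar i) * (ι j x - Hbar j)))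
    (A : Matrix (Fin 3) (Fin 3) ℝ) (hA : A * A.transpose = V)
    (hV0 : 0 < V 0 0) (hV1 : 0 < V 1 1) (hV2 : 0 < V 2 2)
    (HX1 HX2 : ℝ)
    (hHX1 : HX1 = ∑' a, P1 a * Real.log (1 / P1 a))
    (hHX2 : HX2 = ∑' b, P2 b * Real.log (1 / P2 b))
    (δ₁ δ₂ G : ℝ) (hδ₁ : 0 < δ₁) (hδ₂ : 0 < δ₂) (hG : 0 < G)
    (ε : ℝ) (hε : ε ∈ Set.Ioo (0 : ℝ) 1) :
    ∃ n₀ : ℕ, ∀ n : ℕ, n₀ < n →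
      (ε - G / Real.sqrt (n : ℝ) ∈ Set.Ioo (0 : ℝ) 1) ∧
      ∀ r : ℝ, 1 - stdNormalCDF r = ε - G / Real.sqrt (n : ℝ) →
        ∀ R₁ R₂ : ℝ, R₁ ≤ HX1 - δ₁ → R₂ ≤ HX2 - δ₂ →
          R₁ + R₂ = Hbar 2 + Real.sqrt (V 2 2 / (n : ℝ)) * r
              - Real.log (n : ℝ) / (2 * (n : ℝ)) →
          1 - ε ≤ stdGaussianCdf A (fun i =>
              Real.sqrt (n : ℝ) *
                (![R₁, R₂, R₁ + R₂] i - Hbar i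
                  + Real.log (n : ℝ) / (2 * (n : ℝ)))) := by
  have hdiag : ∀ i, V i i = ∑ j, A i j ^ 2 := fun i => by
    simp [← hA, Matrix.mul_apply, Matrix.transpose_apply, sq]
  have hsum : Summable fun x => P x * Real.log (1 / P x) := by simpa only [hι2] using hHfin
  have hH1 : Hbar 1 = Hbar 2 - HX1 := by
    simp only [hH, hι1, hι2, hHX1]
    exact condEntropy_eq P hP0 hPsum P1 hP1 hsum
  have hH0 : Hbar 0 = Hbar 2 - HX2 := by
    simp only [hH, hι0, hι2, hHX2]
    let e := Equiv.prodComm 𝒳₂ 𝒳₁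
    have := condEntropy_eq (P ∘ e) (fun x => hP0 _) ((e.tsum_eq P).trans hPsum) P2 hP2
      ((e.summable_iff (f := fun x => P x * Real.log (1 / P x))).mpr hsum)
    rw [← e.tsum_eq (fun x => P x * Real.log (P2 x.2 / P x)),
      ← e.tsum_eq (fun x => P x * Real.log (1 / P x))]
    exact this
  obtain ⟨r₀, hr₀⟩ := exists_lt_of_stdNormalCDF_ge (sub_pos.mpr hε.2)
  have hsq : Tendsto (fun n : ℕ => Real.sqrt (n : ℝ)) atTop atTop :=
    Real.tendsto_sqrt_atTop.comp tendsto_natCast_atTop_atTop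
  have hev : ∀ᶠ s : ℝ in atTop, 0 < s ∧ 0 < ε - G / s ∧
      (∀ z, s * δ₂ + Real.sqrt (V 2 2) * r₀ ≤ z → 0 < z ∧ V 0 0 / z ^ 2 ≤ G / s / 2) ∧
      (∀ z, s * δ₁ + Real.sqrt (V 2 2) * r₀ ≤ z → 0 < z ∧ V 1 1 / z ^ 2 ≤ G / s / 2) := by
    filter_upwards [eventually_gt_atTop 0, eventually_gt_atTop (G / ε),
      eventually_threshold (V 0 0) δ₂ G (Real.sqrt (V 2 2) * r₀) hV0.le hδ₂ hG,
      eventually_threshold (V 1 1) δ₁ G (Real.sqrt (V 2 2) * r₀) hV1.le hδ₁ hG]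
      with s hs h1 h2 h3
    refine ⟨hs, ?_, h2, h3⟩
    rw [div_lt_iff₀ hε.1] at h1
    rw [sub_pos, div_lt_iff₀ hs]
    linarith
  obtain ⟨n₀, hn₀⟩ := eventually_atTop.mp (hsq.eventually hev)
  refine ⟨n₀, fun n hn => ?_⟩
  obtain ⟨hs, hpos, ht0, ht1⟩ := hn₀ n hn.le
  set s := Real.sqrt (n : ℝ) with hs_def
  have hGs : 0 < G / s := by positivity
  refine ⟨⟨hpos, by linarith [hε.2]⟩, fun r hr R₁ R₂ hR₁ hR₂ hR => ?_⟩
  have hrr : r₀ < r := hr₀ r (by linarith)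
  have hbulk : Real.sqrt (V 2 2) * r₀ ≤ Real.sqrt (V 2 2) * r :=
    mul_le_mul_of_nonneg_left hrr.le (Real.sqrt_nonneg _)
  set L := Real.log (n : ℝ) / (2 * (n : ℝ))
  have hscale : s * (Real.sqrt (V 2 2 / (n : ℝ)) * r) = Real.sqrt (V 2 2) * r := by
    rw [Real.sqrt_div hV2.le, ← hs_def]
    field_simp
  obtain ⟨p0, q0⟩ := ht0 (s * (R₁ - Hbar 0 + L)) (by
    have : δ₂ + Real.sqrt (V 2 2 / (n : ℝ)) * r ≤ R₁ - Hbar 0 + L := by linarith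
    have := mul_le_mul_of_nonneg_left this hs.le
    rw [mul_add, hscale] at this
    linarith)
  obtain ⟨p1, q1⟩ := ht1 (s * (R₂ - Hbar 1 + L)) (by
    have : δ₁ + Real.sqrt (V 2 2 / (n : ℝ)) * r ≤ R₂ - Hbar 1 + L := by linarith
    have := mul_le_mul_of_nonneg_left this hs.le
    rw [mul_add, hscale] at this
    linarith)
  have hmain := stdGaussianCdf_ge A (fun i => s * (![R₁, R₂, R₁ + R₂] i - Hbar i + L)) r
    (hdiag 2 ▸ hV2) p0 p1 (by
      change s * (R₁ + R₂ - Hbar 2 + L) = _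
      rw [← hdiag 2, ← hscale, hR]
      ring)
  rw [← hdiag 0, ← hdiag 1] at hmain
  change _ - V 0 0 / (s * (R₁ - Hbar 0 + L)) ^ 2 - V 1 1 / (s * (R₂ - Hbar 1 + L)) ^ 2 ≤ _
    at hmain
  linarith
end
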